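/- arXiv:1202.2287 — 6 statements merged into one kernel-verified Lean document; each statement's English description precedes it below -/
import Mathlib

section
/- For every finite pointed poset Y, the map r : Π(Y) → Y defined by r(π) = max π, sending each path to its maximal element, is proper and surjective. -/
/-!
In a finite poset a nonempty directed set has a greatest element, so the Scott opens are exactly
the upper sets (`scottOpen_of_isUpperSet`); `Π(Y)`, a subtype of `Set Y`, is finite as well. Hence:

* continuity of `r` is monotonicity, and `π ⊆ π'` gives `max π ∈ π'`, so `max π ≤ max π'`;
* every lower set of `Y` is closed, in particular the downward closure of any image `r '' F`;
* every subset of `Π(Y)` is finite, hence compact.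

A covering chain is strictly increasing, so its last element is its maximum. Surjectivity follows
since in a finite poset `⊥ ≤ y` is the reflexive transitive closure of the covering relation: there
is a covering chain from `⊥` to every `y` (`exists_covBy_chain`), whose set of values is a path with
maximum `y`.
-/

open Set TopologicalSpace

universe u v

section ScottTopology

variable {α : Type u}

/-- A Scott-open subset of a preorder: an upward-closed set that is inaccessible by
directed suprema. -/
def ScottOpen [Preorder α] (U : Set α) : Prop :=
  IsUpperSet U ∧ ∀ d : Set α, d.Nonempty → DirectedOn (· ≤ ·) d →
    ∀ a : α, IsLUB d a → a ∈ U → (d ∩ U).Nonempty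

/-- The Scott topology on a preorder. -/
def scottTop (α : Type u) [Preorder α] : TopologicalSpace α where
  IsOpen := ScottOpen
  isOpen_univ := by
    refine ⟨isUpperSet_univ, ?_⟩
    intro d hd _ a _ _
    obtain ⟨x, hx⟩ := hd
    exact ⟨x, hx, trivial⟩
  isOpen_inter := by
    rintro U V ⟨hU, hU'⟩ ⟨hV, hV'⟩
    refine ⟨hU.inter hV, ?_⟩
    intro d hd hdir a ha hmem
    obtain ⟨x, hxd, hxU⟩ := hU' d hd hdir a ha hmem.1
    obtain ⟨y, hyd, hyV⟩ := hV' d hd hdir a ha hmem.2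
    obtain ⟨z, hzd, hxz, hyz⟩ := hdir x hxd y hyd
    exact ⟨z, hzd, hU hxz hxU, hV hyz hyV⟩
  isOpen_sUnion := by
    intro S hS
    constructor
    · intro a b hab ha
      obtain ⟨U, hUS, haU⟩ := ha
      exact ⟨U, hUS, (hS U hUS).1 hab haU⟩
    · intro d hd hdir a ha hmem
      obtain ⟨U, hUS, haU⟩ := hmem
      obtain ⟨x, hxd, hxU⟩ := (hS U hUS).2 d hd hdir a ha haU
      exact ⟨x, hxd, U, hUS, hxU⟩

/-- A dcpo: every nonempty directed subset has a least upper bound. -/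
def IsDcpo (α : Type u) [Preorder α] : Prop :=
  ∀ d : Set α, d.Nonempty → DirectedOn (· ≤ ·) d → ∃ a : α, IsLUB d a

/-- The upward closure `↑E = {x | ∃ e ∈ E, e ≤ x}` of a set. -/
def upClos [Preorder α] (E : Set α) : Set α := {x | ∃ e ∈ E, e ≤ x}

/-- A finitary compact: a set of the form `↑E` with `E` finite and nonempty. -/
def IsFinitaryCompact [Preorder α] (A : Set α) : Prop :=
  ∃ E : Set α, E.Finite ∧ E.Nonempty ∧ A = upClos E

/-- `Fin(α)`: the nonempty finitary compacts of `α`, ordered by reverse inclusion. -/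
def FinCompacts (α : Type u) [Preorder α] : Type u := {A : Set α // IsFinitaryCompact A}

instance FinCompacts.instPartialOrder [Preorder α] : PartialOrder (FinCompacts α) where
  le A B := B.1 ⊆ A.1
  le_refl A := subset_rfl
  le_trans A B C h1 h2 := subset_trans h2 h1
  le_antisymm A B h1 h2 := Subtype.ext (subset_antisymm h2 h1)

/-- `U ⋘ x`: every directed family whose least upper bound is above `x` has some
member in `U`. -/
def approxes [Preorder α] (U : Set α) (x : α) : Prop :=
  ∀ d : Set α, d.Nonempty → DirectedOn (· ≤ ·) d →
    ∀ a : α, IsLUB d a → x ≤ a → ∃ z ∈ d, z ∈ U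

/-- A quasi-deflation: a map `φ : α → Fin_σ(α)`, continuous for the Scott topologies,
such that `x ∈ φ x` for every `x`, and with finite image. -/
def IsQuasiDeflation [Preorder α] (φ : α → FinCompacts α) : Prop :=
  @Continuous α (FinCompacts α) (scottTop α) (scottTop (FinCompacts α)) φ ∧
  (∀ x : α, x ∈ (φ x).1) ∧ (Set.range φ).Finite

/-- A generating family of quasi-deflations: a (nonempty) family of quasi-deflations,
directed in the pointwise reverse-inclusion order, with `⋂ i, φ i x = ↑x` for all `x`. -/
def IsGeneratingFamily [Preorder α] {I : Type v} (φ : I → α → FinCompacts α) : Prop :=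
  Nonempty I ∧
  (∀ i j : I, ∃ k : I, (∀ x, (φ k x).1 ⊆ (φ i x).1) ∧ (∀ x, (φ k x).1 ⊆ (φ j x).1)) ∧
  (∀ i, IsQuasiDeflation (φ i)) ∧
  (∀ x : α, (⋂ i, (φ i x).1) = Set.Ici x)

/-- A QRB-domain: a pointed dcpo with a generating family of quasi-deflations. -/
def IsQRBDomain (α : Type u) [PartialOrder α] : Prop :=
  IsDcpo α ∧ (∃ b : α, ∀ x, b ≤ x) ∧
  ∃ (I : Type u) (φ : I → α → FinCompacts α), IsGeneratingFamily φ

/-- An ωQRB-domain: a pointed dcpo with a countable generating family of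
quasi-deflations. -/
def IsOmegaQRBDomain (α : Type u) [PartialOrder α] : Prop :=
  IsDcpo α ∧ (∃ b : α, ∀ x, b ≤ x) ∧
  ∃ (I : Type u), Countable I ∧
    ∃ φ : I → α → FinCompacts α, IsGeneratingFamily φ

/-- A deflation on a pointed dcpo: a Scott-continuous map below the identity, with
finite image. -/
def IsDeflation [Preorder α] (f : α → α) : Prop :=
  @Continuous α α (scottTop α) (scottTop α) f ∧ (∀ x, f x ≤ x) ∧ (Set.range f).Finite

/-- An RB-domain: a pointed dcpo with a directed family of deflations whose pointwise
least upper bound is the identity. -/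
def IsRBDomain (α : Type u) [PartialOrder α] : Prop :=
  IsDcpo α ∧ (∃ b : α, ∀ x, b ≤ x) ∧
  ∃ (I : Type u) (f : I → α → α), Nonempty I ∧
    (∀ i j : I, ∃ k : I, (∀ x, f i x ≤ f k x) ∧ (∀ x, f j x ≤ f k x)) ∧
    (∀ i, IsDeflation (f i)) ∧
    ∀ x : α, IsLUB (Set.range fun i => f i x) x

/-- An ωB-domain (SFP-domain): a pointed dcpo with a non-decreasing sequence of
idempotent deflations whose pointwise least upper bound is the identity. -/
def IsOmegaBDomain (α : Type u) [PartialOrder α] : Prop :=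
  IsDcpo α ∧ (∃ b : α, ∀ x, b ≤ x) ∧
  ∃ f : ℕ → α → α,
    (∀ i, IsDeflation (f i)) ∧
    (∀ i, ∀ x, f i (f i x) = f i x) ∧
    (∀ i j : ℕ, i ≤ j → ∀ x, f i x ≤ f j x) ∧
    ∀ x : α, IsLUB (Set.range fun i => f i x) x

/-- A map finitely separated from the identity. -/
def IsFinitelySeparated [Preorder α] (f : α → α) : Prop :=
  ∃ M : Set α, M.Finite ∧ ∀ x : α, ∃ m ∈ M, f x ≤ m ∧ m ≤ x

/-- An FS-domain: a pointed dcpo with a directed family of continuous maps, each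
finitely separated from the identity, whose pointwise least upper bound is the
identity. -/
def IsFSDomain (α : Type u) [PartialOrder α] : Prop :=
  IsDcpo α ∧ (∃ b : α, ∀ x, b ≤ x) ∧
  ∃ (I : Type u) (f : I → α → α), Nonempty I ∧
    (∀ i j : I, ∃ k : I, (∀ x, f i x ≤ f k x) ∧ (∀ x, f j x ≤ f k x)) ∧
    (∀ i, @Continuous α α (scottTop α) (scottTop α) (f i) ∧ IsFinitelySeparated (f i)) ∧
    ∀ x : α, IsLUB (Set.range fun i => f i x) x

/-- A controlled QRB-domain: a pointed dcpo with a directed family of controlled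
quasi-deflations `(f i, φ i)` (i.e. `φ i x ⊆ ↑(f i x)`) with `x = sup_i f i x`. -/
def IsControlledQRBDomain (α : Type u) [PartialOrder α] : Prop :=
  IsDcpo α ∧ (∃ b : α, ∀ x, b ≤ x) ∧
  ∃ (I : Type u) (f : I → α → α) (φ : I → α → FinCompacts α), Nonempty I ∧
    (∀ i j : I, ∃ k : I,
      ((∀ x, f i x ≤ f k x) ∧ ∀ x, (φ k x).1 ⊆ (φ i x).1) ∧
      ((∀ x, f j x ≤ f k x) ∧ ∀ x, (φ k x).1 ⊆ (φ j x).1)) ∧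
    (∀ i, @Continuous α α (scottTop α) (scottTop α) (f i) ∧ IsQuasiDeflation (φ i) ∧
      ∀ x, (φ i x).1 ⊆ Set.Ici (f i x)) ∧
    ∀ x : α, IsLUB (Set.range fun i => f i x) x

/-- A continuous dcpo: for every `x`, the set of elements way-below `x` is
(nonempty and) directed and has `x` as least upper bound. -/
def IsContinuousDcpo (α : Type u) [Preorder α] : Prop :=
  IsDcpo α ∧ ∀ x : α,
    {y : α | approxes (Set.Ici y) x}.Nonempty ∧
    DirectedOn (· ≤ ·) {y : α | approxes (Set.Ici y) x} ∧
    IsLUB {y : α | approxes (Set.Ici y) x} x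

/-- The finitary compacts `↑E` (E finite nonempty) that approximate `x`. -/
def finUpsBelow [Preorder α] (x : α) : Set (Set α) :=
  {A | (∃ E : Set α, E.Finite ∧ E.Nonempty ∧ A = upClos E) ∧ approxes A x}

/-- A quasi-continuous dcpo. -/
def IsQuasiContinuous (α : Type u) [Preorder α] : Prop :=
  IsDcpo α ∧ ∀ x : α,
    (finUpsBelow x).Nonempty ∧
    DirectedOn (fun A B : Set α => B ⊆ A) (finUpsBelow x) ∧
    ⋂₀ finUpsBelow x = Set.Ici x

/-- The upper Vietoris topology on `Fin(α)` (the subspace topology induced from the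
Smyth powerspace of `α` with its Scott topology), generated by the sets
`◻U = {↑E | ↑E ⊆ U}` for `U` Scott-open. -/
def finUpperVietoris (α : Type u) [Preorder α] : TopologicalSpace (FinCompacts α) :=
  TopologicalSpace.generateFrom
    {S | ∃ U : Set α, ScottOpen U ∧ S = {A : FinCompacts α | A.1 ⊆ U}}

end ScottTopology

section Spaces

variable {X : Type u} {Y : Type v}

/-- The specialization preorder of a topological space: `x ≤ y` iff every open set
containing `x` contains `y`. -/
def specLE [TopologicalSpace X] (x y : X) : Prop :=
  ∀ U : Set X, IsOpen U → x ∈ U → y ∈ U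

/-- `↑x` in the specialization preorder. -/
def specUp [TopologicalSpace X] (x : X) : Set X := {y | specLE x y}

/-- Upward closure of a set in the specialization preorder. -/
def specUpSet [TopologicalSpace X] (A : Set X) : Set X := {y | ∃ a ∈ A, specLE a y}

/-- Downward closure of a set in the specialization preorder. -/
def specDownSet [TopologicalSpace X] (A : Set X) : Set X := {x | ∃ a ∈ A, specLE x a}

/-- A saturated set: one that is upward closed in the specialization preorder. -/
def IsSaturatedSet [TopologicalSpace X] (A : Set X) : Prop :=
  ∀ x ∈ A, ∀ y : X, specLE x y → y ∈ A

/-- A coherent space: the intersection of any two compact saturated subsets is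
compact. -/
def IsCoherent (X : Type u) [TopologicalSpace X] : Prop :=
  ∀ Q₁ Q₂ : Set X, IsCompact Q₁ → IsSaturatedSet Q₁ → IsCompact Q₂ → IsSaturatedSet Q₂ →
    IsCompact (Q₁ ∩ Q₂)

/-- A stably compact space: T0, compact, locally compact, sober and coherent. -/
def IsStablyCompact (X : Type u) [TopologicalSpace X] : Prop :=
  T0Space X ∧ CompactSpace X ∧ LocallyCompactSpace X ∧ QuasiSober X ∧ IsCoherent X

/-- A proper map: continuous, the downward closure of the image of any closed set is
closed, and the preimage of `↑y` is compact for every `y`. -/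
def PaperProper [TopologicalSpace X] [TopologicalSpace Y] (r : X → Y) : Prop :=
  Continuous r ∧
  (∀ F : Set X, IsClosed F → IsClosed (specDownSet (r '' F))) ∧
  ∀ y : Y, IsCompact (r ⁻¹' specUp y)

/-- The Smyth powerspace: nonempty compact saturated subsets. -/
def SmythP (X : Type u) [TopologicalSpace X] : Type u :=
  {Q : Set X // Q.Nonempty ∧ IsCompact Q ∧ IsSaturatedSet Q}

/-- The upper Vietoris topology on the Smyth powerspace, generated by the sets
`◻U = {Q | Q ⊆ U}`, `U` open. -/
instance SmythP.instTopologicalSpace [TopologicalSpace X] : TopologicalSpace (SmythP X) :=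
  TopologicalSpace.generateFrom
    {S | ∃ U : Set X, IsOpen U ∧ S = {Q : SmythP X | Q.1 ⊆ U}}

/-- The order on the Smyth powerspace: reverse inclusion. -/
instance SmythP.instPartialOrder [TopologicalSpace X] : PartialOrder (SmythP X) where
  le Q Q' := Q'.1 ⊆ Q.1
  le_refl Q := subset_rfl
  le_trans Q Q' Q'' h1 h2 := subset_trans h2 h1
  le_antisymm Q Q' h1 h2 := Subtype.ext (subset_antisymm h2 h1)

/-- A quasi-retraction `r : X → Y`: a continuous map admitting a continuous
quasi-section `ς : Y → S_V(X)` with `↑{r x | x ∈ ς y} = ↑y` for every `y`. -/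
def IsQuasiRetraction [TopologicalSpace X] [TopologicalSpace Y] (r : X → Y) : Prop :=
  Continuous r ∧
  ∃ ς : Y → SmythP X, Continuous ς ∧ ∀ y : Y, specUpSet (r '' (ς y).1) = specUp y

/-- The specialization ordering of a T0 space, as a partial order. -/
def specOrder (X : Type u) [TopologicalSpace X] [T0Space X] : PartialOrder X where
  le := specLE
  le_refl x := fun _ _ h => h
  le_trans x y z h1 h2 := fun U hU hx => h2 U hU (h1 U hU hx)
  le_antisymm x y h1 h2 :=
    (inseparable_iff_forall_isOpen.mpr fun U hU => ⟨h1 U hU, h2 U hU⟩).eq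

/-- A continuous probability valuation on a topological space: a map from opens to
nonnegative reals that is strict, monotone, modular, continuous (preserves directed
suprema of opens) and normalized. -/
structure IsProbValuation [TopologicalSpace X] (ν : Opens X → NNReal) : Prop where
  empty : ν ⊥ = 0
  mono : ∀ U V : Opens X, U ≤ V → ν U ≤ ν V
  modular : ∀ U V : Opens X, ν (U ⊔ V) + ν (U ⊓ V) = ν U + ν V
  scont : ∀ S : Set (Opens X), S.Nonempty → DirectedOn (· ≤ ·) S →
    ν (sSup S) = ⨆ U ∈ S, ν U
  total : ν ⊤ = 1

/-- `V_1(X)`: the probability valuations on `X`, ordered pointwise. -/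
abbrev ProbVal (X : Type u) [TopologicalSpace X] : Type u :=
  {ν : Opens X → NNReal // IsProbValuation ν}

/-- The weak topology on `V_1(X)`, generated by the sets `[U > a]`. -/
def weakTop (X : Type u) [TopologicalSpace X] : TopologicalSpace (ProbVal X) :=
  TopologicalSpace.generateFrom
    {S | ∃ (U : Opens X) (a : ℝ), S = {ν : ProbVal X | a < (ν.1 U : ℝ)}}

/-- `ν†(Q) = inf {ν U | U open, Q ⊆ U}`. -/
noncomputable def dagVal [TopologicalSpace X] (ν : Opens X → NNReal) (Q : Set X) :
    NNReal :=
  ⨅ U : {U : Opens X // Q ⊆ U.1}, ν U.1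

end Spaces

section Paths

variable {Y : Type u}

/-- A path in a pointed poset: a finite covering chain starting at the least
element. -/
def IsPathIn [PartialOrder Y] (bot : Y) (S : Set Y) : Prop :=
  ∃ (n : ℕ) (c : Fin (n + 1) → Y), c 0 = bot ∧
    (∀ i : Fin n, c i.castSucc ⋖ c i.succ) ∧ S = Set.range c

/-- The path space `Π(Y)` of a pointed poset, ordered by inclusion. -/
abbrev PathSpace (Y : Type u) [PartialOrder Y] (bot : Y) : Type u :=
  {S : Set Y // IsPathIn bot S}

end Paths

theorem scottOpen_of_isUpperSet {α : Type u} [Preorder α] [Finite α] {U : Set α}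
    (hU : IsUpperSet U) : ScottOpen U := by
  refine ⟨hU, fun d hd hdir a ha haU => ?_⟩
  obtain ⟨m, hm⟩ := d.toFinite.exists_maximal hd
  refine ⟨m, hm.prop, hU (ha.2 fun x hx => ?_) haU⟩
  -- A maximal element of a directed set is its greatest element.
  obtain ⟨z, hz, hmz, hxz⟩ := hdir m hm.prop x hx
  exact hxz.trans (hm.le_of_ge hz hmz)

/-- The last element of a covering chain is the greatest element of the path it traces. -/
theorem isGreatest_range_last {Y : Type u} [PartialOrder Y] {n : ℕ} {c : Fin (n + 1) → Y}
    (hc : ∀ i : Fin n, c i.castSucc ⋖ c i.succ) :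
    IsGreatest (Set.range c) (c (Fin.last n)) := by
  have hmono : StrictMono c := Fin.strictMono_iff_lt_succ.2 fun i => (hc i).lt
  refine ⟨⟨_, rfl⟩, ?_⟩
  rintro _ ⟨i, rfl⟩
  exact hmono.monotone (Fin.le_last i)

theorem exists_covBy_chain {Y : Type u} [PartialOrder Y] [Finite Y] {x y : Y} (h : x ≤ y) :
    ∃ (n : ℕ) (c : Fin (n + 1) → Y), c 0 = x ∧
      (∀ i : Fin n, c i.castSucc ⋖ c i.succ) ∧ c (Fin.last n) = y := by
  classical
  have := Fintype.ofFinite Y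
  let _ : LocallyFiniteOrder Y := Fintype.toLocallyFiniteOrder
  induction le_iff_reflTransGen_covBy.1 h with
  | refl => exact ⟨0, fun _ => x, rfl, fun i => i.elim0, rfl⟩
  | @tail b z hxb hbz ih =>
    obtain ⟨n, c, h0, hc, hl⟩ := ih (le_iff_reflTransGen_covBy.2 hxb)
    refine ⟨n + 1, Fin.snoc (α := fun _ => Y) c z, ?_, fun i => ?_, Fin.snoc_last _ _⟩
    · rw [← Fin.castSucc_zero, Fin.snoc_castSucc, h0]
    · rw [Fin.snoc_castSucc]
      refine Fin.lastCases ?_ (fun j => ?_) i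
      · rw [Fin.succ_last, Fin.snoc_last, hl]
        exact hbz
      · rw [Fin.succ_castSucc, Fin.snoc_castSucc]
        exact hc j

/-- For every finite pointed poset `Y`, the map `r : Π(Y) → Y` sending each path to
its maximal element is proper and surjective. -/
theorem pathSpace_max_proper_surjective {Y : Type u} [PartialOrder Y] [Finite Y]
    (bot : Y) (hbot : ∀ y, bot ≤ y) :
    ∃ r : PathSpace Y bot → Y,
      (∀ π : PathSpace Y bot, IsGreatest π.1 (r π)) ∧
      @PaperProper (PathSpace Y bot) Y (scottTop (PathSpace Y bot)) (scottTop Y) r ∧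
      Function.Surjective r := by
  have hgr : ∀ π : PathSpace Y bot, ∃ m, IsGreatest π.1 m := by
    rintro ⟨_, n, c, -, hc, rfl⟩
    exact ⟨_, isGreatest_range_last hc⟩
  choose r hr using hgr
  refine ⟨r, hr, ?_, fun y => ?_⟩
  · let _ : TopologicalSpace (PathSpace Y bot) := scottTop (PathSpace Y bot)
    let _ : TopologicalSpace Y := scottTop Y
    have hmono : Monotone r := fun π π' h => (hr π').2 (h (hr π).1)
    refine ⟨⟨fun U hU => ?_⟩, fun F _ => ⟨?_⟩, fun y => (Set.toFinite _).isCompact⟩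
    · exact scottOpen_of_isUpperSet (hU.1.preimage hmono)
    · refine scottOpen_of_isUpperSet ?_
      rintro a b hab ha ⟨f, hf, hbf⟩
      -- Scott opens are upper sets, so `a ≤ b` implies `specLE a b`.
      exact ha ⟨f, hf, fun U hU haU => hbf U hU (hU.1 hab haU)⟩
  · obtain ⟨n, c, h0, hc, hl⟩ := exists_covBy_chain (hbot y)
    refine ⟨⟨Set.range c, n, c, h0, hc, rfl⟩, ?_⟩
    exact (hr _).unique (hl ▸ isGreatest_range_last hc)
end

section
/- For every QRB-domain X, the Smyth powerdomain S(X), i.e. the set of nonempty compact saturated subsets of X ordered by reverse inclusion ⊇, is an RB-domain. -/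
/-!
A quasi-deflation `φ` on `X` induces the map `Q ↦ ⋃ x ∈ Q, φ x` on the Smyth powerdomain. It lies
below the identity (`x ∈ φ x`), it has finite image because `φ` does, and its values are finitary
compacts. Applied to a generating family of quasi-deflations, this construction gives the required
directed family of deflations.

Two ingredients carry the proof.

* A Scott-continuous map with finite image attains its value at a directed supremum already on the
  directed set (`exists_eq_of_isLUB`), so the preimage of *any* upper set is Scott-open
  (`scottOpen_preimage`). Together with compactness of `Q` this yields `⋂ i, ⋃ x ∈ Q, φ i x = Q`
  (`iInter_lift`).
* `X` is well-filtered (`exists_subset_of_iInter_subset`): if a filtered intersection of compact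
  saturated sets `Q j` lies in an open `U`, then so does some `Q j`. For finitary compacts this is
  a form of Rudin's lemma (`exists_finitary_subset`). In general, for each `i` the filtered family
  `j ↦ ⋃ x ∈ Q j, φ i x` takes finitely many values, hence has a least one `K i`; the `K i` form a
  filtered family of finitary compacts with intersection `⋂ j, Q j`, so some `K i`, and with it
  some `Q j`, lies in `U`.

Well-filteredness shows that directed suprema in the Smyth powerdomain are intersections, and that
the induced maps are Scott-continuous: `{x | φ x ⊆ ⋃ y ∈ Q, φ y}` is an open neighbourhood of `Q`.
-/

open Set TopologicalSpace

universe u v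

section Proof

variable {α : Type u} {β : Type v}

/-! ### Scott-continuous maps with finite image -/

theorem scottOpen_not_le [Preorder α] (a : α) : ScottOpen {x : α | ¬ x ≤ a} := by
  refine ⟨fun x y hxy hx hy => hx (hxy.trans hy), fun d _ _ s hs hsa => ?_⟩
  by_contra h
  refine hsa (hs.2 fun x hx => ?_)
  by_contra hxa
  exact h ⟨x, hx, hxa⟩

theorem monotone_of_scottContinuous [Preorder α] [Preorder β] {f : α → β}
    (hf : @Continuous α β (scottTop α) (scottTop β) f) : Monotone f := by
  intro x y hxy
  by_contra h
  have ho : ScottOpen (f ⁻¹' {z | ¬ z ≤ f y}) :=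
    @Continuous.isOpen_preimage _ _ (scottTop _) (scottTop _) _ hf _ (scottOpen_not_le (f y))
  exact ho.1 hxy h le_rfl

/-- The image of the directed set `d` is finite and directed, so it has a greatest element, which
is its supremum. -/
theorem exists_eq_of_isLUB [Preorder α] [PartialOrder β] {f : α → β}
    (hf : @Continuous α β (scottTop α) (scottTop β) f) (hfin : (range f).Finite)
    {d : Set α} (hd : d.Nonempty) (hdir : DirectedOn (· ≤ ·) d) {a : α} (ha : IsLUB d a) :
    ∃ x ∈ d, f x = f a := by
  have hmono := monotone_of_scottContinuous hf
  obtain ⟨b, hb⟩ := (hfin.subset (image_subset_range f d)).exists_maximal (hd.image f)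
  obtain ⟨x, hxd, rfl⟩ := hb.1
  refine ⟨x, hxd, le_antisymm (hmono (ha.1 hxd)) ?_⟩
  by_contra h
  have ho : ScottOpen (f ⁻¹' {z | ¬ z ≤ f x}) :=
    @Continuous.isOpen_preimage _ _ (scottTop _) (scottTop _) _ hf _ (scottOpen_not_le (f x))
  obtain ⟨y, hyd, hy⟩ := ho.2 d hd hdir a ha h
  obtain ⟨z, hzd, hxz, hyz⟩ := hdir x hxd y hyd
  exact hy ((hmono hyz).trans (hb.2 ⟨z, hzd, rfl⟩ (hmono hxz)))

/-- The upper set `S` need not be Scott-open: finiteness of the image compensates for this. -/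
theorem scottOpen_preimage [Preorder α] [PartialOrder β] {f : α → β}
    (hf : @Continuous α β (scottTop α) (scottTop β) f) (hfin : (range f).Finite)
    {S : Set β} (hS : IsUpperSet S) : ScottOpen (f ⁻¹' S) := by
  refine ⟨fun x y hxy hx => hS (monotone_of_scottContinuous hf hxy) hx,
    fun d hd hdir a ha haS => ?_⟩
  obtain ⟨x, hxd, hx⟩ := exists_eq_of_isLUB hf hfin hd hdir ha
  exact ⟨x, hxd, by rw [mem_preimage, hx]; exact haS⟩

/-! ### Finitary compacts -/

theorem IsFinitaryCompact.isUpperSet [Preorder α] {A : Set α} (hA : IsFinitaryCompact A) :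
    IsUpperSet A := by
  obtain ⟨E, -, -, rfl⟩ := hA
  rintro x y hxy ⟨e, he, hex⟩
  exact ⟨e, he, hex.trans hxy⟩

theorem IsFinitaryCompact.nonempty [Preorder α] {A : Set α} (hA : IsFinitaryCompact A) :
    A.Nonempty := by
  obtain ⟨E, -, ⟨e, he⟩, rfl⟩ := hA
  exact ⟨e, e, he, le_rfl⟩

theorem IsFinitaryCompact.isCompact [Preorder α] [TopologicalSpace α]
    (hT : ∀ U : Set α, IsOpen U ↔ ScottOpen U) {A : Set α} (hA : IsFinitaryCompact A) :
    IsCompact A := by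
  obtain ⟨E, hE, -, rfl⟩ := hA
  refine isCompact_of_finite_subcover fun {ι} U hU hcov => ?_
  obtain ⟨t, ht⟩ := hE.isCompact.elim_finite_subcover U hU
    (fun e he => hcov ⟨e, he, le_rfl⟩)
  refine ⟨t, ?_⟩
  rintro x ⟨e, he, hex⟩
  obtain ⟨i, hi, hei⟩ := mem_iUnion₂.1 (ht he)
  exact mem_iUnion₂.2 ⟨i, hi, ((hT _).1 (hU i)).1 hex hei⟩

/-- A form of Rudin's lemma: well-filteredness of a dcpo with respect to finitary compacts. A
minimal lower set meeting every `K i` outside `U` is directed, and its supremum lies in every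
`K i`. -/
theorem exists_finitary_subset [PartialOrder α] (hα : IsDcpo α) {ι : Type v} [Nonempty ι]
    {K : ι → Set α} (hK : ∀ i, IsFinitaryCompact (K i)) (hdir : Directed (· ⊇ ·) K)
    {U : Set α} (hU : ScottOpen U) (hKU : (⋂ i, K i) ⊆ U) : ∃ i, K i ⊆ U := by
  by_contra! hcon
  let S : Set (Set α) := {C | IsLowerSet C ∧ C ⊆ Uᶜ ∧ ∀ i, (C ∩ K i).Nonempty}
  have hUS : Uᶜ ∈ S := by
    refine ⟨hU.1.compl, subset_rfl, fun i => ?_⟩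
    obtain ⟨x, hxK, hxU⟩ := not_subset.1 (hcon i)
    exact ⟨x, hxU, hxK⟩
  have hchain : ∀ c ⊆ S, IsChain (· ⊆ ·) c → c.Nonempty → ∃ lb ∈ S, ∀ s ∈ c, lb ⊆ s := by
    intro c hcS hc hne
    refine ⟨⋂₀ c, ⟨isLowerSet_sInter fun s hs => (hcS hs).1, ?_, fun i => ?_⟩,
      fun s hs => sInter_subset_of_mem hs⟩
    · obtain ⟨s, hs⟩ := hne
      exact (sInter_subset_of_mem hs).trans (hcS hs).2.1
    · obtain ⟨E, hE, -, hKE⟩ := hK i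
      by_contra hempty
      -- If `⋂₀ c` misses the finite set `E`, then so does a single member of the chain `c`.
      have hcov : E ⊆ ⋃₀ (compl '' c) := by
        intro e he
        have hec : e ∉ ⋂₀ c := fun h => hempty ⟨e, h, by rw [hKE]; exact ⟨e, he, le_rfl⟩⟩
        obtain ⟨s, hs, hes⟩ : ∃ s ∈ c, e ∉ s := by simpa using hec
        exact ⟨sᶜ, ⟨s, hs, rfl⟩, hes⟩
      have hcd : DirectedOn (· ⊆ ·) (compl '' c) := by
        rintro _ ⟨s, hs, rfl⟩ _ ⟨t, ht, rfl⟩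
        rcases hc.total hs ht with h | h
        · exact ⟨sᶜ, ⟨s, hs, rfl⟩, subset_rfl, compl_subset_compl.2 h⟩
        · exact ⟨tᶜ, ⟨t, ht, rfl⟩, compl_subset_compl.2 h, subset_rfl⟩
      obtain ⟨_, ⟨s, hs, rfl⟩, hEs⟩ :=
        hcd.exists_mem_subset_of_finite_of_subset_sUnion (hne.image _) hE hcov
      obtain ⟨x, hxs, hxK⟩ := (hcS hs).2.2 i
      rw [hKE] at hxK
      obtain ⟨e, he, hex⟩ := hxK
      exact hEs he ((hcS hs).1 hex hxs)
  obtain ⟨C, -, hC⟩ := zorn_superset_nonempty S hchain _ hUS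
  obtain ⟨hlow, hCU, hmeet⟩ := hC.1
  -- By minimality, `C \ ↑a` misses some `K i` whenever `a ∈ C`.
  have key : ∀ a ∈ C, ∃ i, ∀ x ∈ C, x ∈ K i → a ≤ x := by
    intro a ha
    by_contra! h
    have hmem : {x | x ∈ C ∧ ¬ a ≤ x} ∈ S := by
      refine ⟨fun x y hyx hx => ⟨hlow hyx hx.1, fun h => hx.2 (h.trans hyx)⟩,
        fun x hx => hCU hx.1, fun i => ?_⟩
      obtain ⟨x, hxC, hxK, hax⟩ := h i
      exact ⟨x, ⟨hxC, hax⟩, hxK⟩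
    exact (hC.2 hmem (fun x hx => hx.1) ha).2 le_rfl
  have hCne : C.Nonempty := (hmeet (Classical.arbitrary ι)).mono inter_subset_left
  have hCdir : DirectedOn (· ≤ ·) C := by
    intro a ha b hb
    obtain ⟨i, hi⟩ := key a ha
    obtain ⟨j, hj⟩ := key b hb
    obtain ⟨k, hki, hkj⟩ := hdir i j
    obtain ⟨c, hcC, hcK⟩ := hmeet k
    exact ⟨c, hcC, hi c hcC (hki hcK), hj c hcC (hkj hcK)⟩
  obtain ⟨s, hs⟩ := hα C hCne hCdir
  have hsU : s ∈ U := by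
    refine hKU (mem_iInter.2 fun i => ?_)
    obtain ⟨c, hcC, hcK⟩ := hmeet i
    exact (hK i).isUpperSet (hs.1 hcC) hcK
  obtain ⟨x, hxC, hxU⟩ := hU.2 C hCne hCdir s hs hsU
  exact hCU hxC hxU

/-! ### The action of a quasi-deflation on sets -/

/-- The action `Q ↦ ⋃ x ∈ Q, φ x` of a map `φ : α → Fin(α)` on arbitrary subsets of `α`. -/
def lift [Preorder α] (φ : α → FinCompacts α) (Q : Set α) : Set α := ⋃ x ∈ Q, (φ x).1

theorem mem_lift [Preorder α] {φ : α → FinCompacts α} {Q : Set α} {z : α} :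
    z ∈ lift φ Q ↔ ∃ x ∈ Q, z ∈ (φ x).1 := by
  simp [lift]

theorem lift_mono [Preorder α] (φ : α → FinCompacts α) {Q R : Set α} (h : Q ⊆ R) :
    lift φ Q ⊆ lift φ R :=
  biUnion_subset_biUnion_left h

theorem IsQuasiDeflation.subset_lift [Preorder α] {φ : α → FinCompacts α}
    (hφ : IsQuasiDeflation φ) (Q : Set α) : Q ⊆ lift φ Q :=
  fun x hx => mem_lift.2 ⟨x, hx, hφ.2.1 x⟩

theorem IsQuasiDeflation.finite_range_lift [Preorder α] {φ : α → FinCompacts α}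
    (hφ : IsQuasiDeflation φ) : (range (lift φ)).Finite := by
  refine (hφ.2.2.finite_subsets.image fun T : Set (FinCompacts α) => ⋃ A ∈ T, A.1).subset ?_
  rintro _ ⟨Q, rfl⟩
  exact ⟨φ '' Q, image_subset_range φ Q, by simp [lift]⟩

theorem IsQuasiDeflation.isFinitaryCompact_lift [Preorder α] {φ : α → FinCompacts α}
    (hφ : IsQuasiDeflation φ) {Q : Set α} (hQ : Q.Nonempty) : IsFinitaryCompact (lift φ Q) := by
  choose E hEfin hEne hE using fun A : FinCompacts α => A.2
  refine ⟨⋃ A ∈ φ '' Q, E A,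
    (hφ.2.2.subset (image_subset_range φ Q)).biUnion fun A _ => hEfin A, ?_, ?_⟩
  · obtain ⟨x, hx⟩ := hQ
    obtain ⟨e, he⟩ := hEne (φ x)
    exact ⟨e, mem_biUnion (mem_image_of_mem φ hx) he⟩
  · ext z
    rw [mem_lift]
    constructor
    · rintro ⟨x, hx, hz⟩
      rw [hE (φ x)] at hz
      obtain ⟨e, he, hez⟩ := hz
      exact ⟨e, mem_biUnion (mem_image_of_mem φ hx) he, hez⟩
    · rintro ⟨e, he, hez⟩
      obtain ⟨_, ⟨x, hx, rfl⟩, he⟩ := mem_iUnion₂.1 he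
      exact ⟨x, hx, by rw [hE (φ x)]; exact ⟨e, he, hez⟩⟩

theorem IsQuasiDeflation.scottOpen_subset [Preorder α] {φ : α → FinCompacts α}
    (hφ : IsQuasiDeflation φ) (A : Set α) : ScottOpen {x | (φ x).1 ⊆ A} :=
  scottOpen_preimage hφ.1 hφ.2.2 (S := {B : FinCompacts α | B.1 ⊆ A})
    fun _ _ hBC hB => Subset.trans hBC hB

/-- The finitary compacts `⋃ x ∈ Q, φ i x` approximate the compact saturated set `Q`. Here and
below, `hT` says that `α` carries the Scott topology. -/
theorem iInter_lift [PartialOrder α] [TopologicalSpace α]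
    (hT : ∀ U : Set α, IsOpen U ↔ ScottOpen U) {I : Type v} {φ : I → α → FinCompacts α}
    (hφ : IsGeneratingFamily φ) {Q : Set α} (hQ : IsCompact Q) (hup : IsUpperSet Q) :
    (⋂ i, lift (φ i) Q) = Q := by
  obtain ⟨hI, hdir, hqd, hgen⟩ := hφ
  refine subset_antisymm (fun z hz => ?_) (subset_iInter fun i => (hqd i).subset_lift Q)
  by_contra hzQ
  -- If `z ∉ Q`, the open sets `{x | z ∉ φ i x}` form a directed cover of `Q`.
  obtain ⟨i, hi⟩ := hQ.elim_directed_cover (fun i => {x | (φ i x).1 ⊆ {z}ᶜ})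
    (fun i => (hT _).2 ((hqd i).scottOpen_subset _))
    (by
      intro x hx
      have hzx : z ∉ ⋂ i, (φ i x).1 := by
        rw [hgen x]
        exact fun h => hzQ (hup h hx)
      obtain ⟨i, hi⟩ : ∃ i, z ∉ (φ i x).1 := by simpa using hzx
      exact mem_iUnion.2 ⟨i, subset_compl_singleton_iff.2 hi⟩)
    (by
      intro i j
      obtain ⟨k, hki, hkj⟩ := hdir i j
      exact ⟨k, fun x hx => (hki x).trans hx, fun x hx => (hkj x).trans hx⟩)
  obtain ⟨x, hx, hzx⟩ := mem_lift.1 (mem_iInter.1 hz i)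
  exact hi hx hzx rfl

/-! ### Well-filteredness -/

/-- QRB-domains are well-filtered. Each `Q j` is replaced by its finitary approximations
`lift (φ i) (Q j)`, which take finitely many values as `j` varies, so that Rudin's lemma applies. -/
theorem exists_subset_of_iInter_subset [PartialOrder α] [TopologicalSpace α]
    (hT : ∀ U : Set α, IsOpen U ↔ ScottOpen U) (hα : IsDcpo α) {I : Type v}
    {φ : I → α → FinCompacts α} (hφ : IsGeneratingFamily φ)
    {J : Type*} [Nonempty J] {Q : J → Set α} (hne : ∀ j, (Q j).Nonempty)
    (hQ : ∀ j, IsCompact (Q j)) (hup : ∀ j, IsUpperSet (Q j)) (hdir : Directed (· ⊇ ·) Q)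
    {U : Set α} (hU : ScottOpen U) (hQU : (⋂ j, Q j) ⊆ U) : ∃ j, Q j ⊆ U := by
  have hI := hφ.1
  have hqd := hφ.2.2.1
  have hmin : ∀ i, ∃ m, ∀ j, lift (φ i) (Q m) ⊆ lift (φ i) (Q j) := by
    intro i
    have hfin : (range fun j => lift (φ i) (Q j)).Finite :=
      (hqd i).finite_range_lift.subset (by rintro _ ⟨j, rfl⟩; exact ⟨Q j, rfl⟩)
    obtain ⟨A, hA⟩ := hfin.exists_minimal (range_nonempty _)
    obtain ⟨m, rfl⟩ := hA.1
    refine ⟨m, fun j => ?_⟩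
    obtain ⟨k, hkm, hkj⟩ := hdir m j
    exact Subset.trans (hA.2 ⟨k, rfl⟩ (lift_mono _ hkm)) (lift_mono _ hkj)
  choose m hm using hmin
  obtain ⟨i, hi⟩ := exists_finitary_subset hα (K := fun i => lift (φ i) (Q (m i)))
    (fun i => (hqd i).isFinitaryCompact_lift (hne _))
    (by
      intro i i'
      obtain ⟨k, hki, hki'⟩ := hφ.2.1 i i'
      exact ⟨k, (hm k (m i)).trans (biUnion_mono subset_rfl fun x _ => hki x),
        (hm k (m i')).trans (biUnion_mono subset_rfl fun x _ => hki' x)⟩)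
    hU
    (by
      refine Subset.trans (subset_iInter fun j => ?_) hQU
      conv_rhs => rw [← iInter_lift hT hφ (hQ j) (hup j)]
      exact iInter_mono fun i => hm i j)
  exact ⟨m i, ((hqd i).subset_lift _).trans hi⟩

/-! ### The Smyth powerdomain -/

theorem isSaturatedSet_iff_isUpperSet [Preorder α] [TopologicalSpace α]
    (hT : ∀ U : Set α, IsOpen U ↔ ScottOpen U) {A : Set α} :
    IsSaturatedSet A ↔ IsUpperSet A := by
  constructor
  · exact fun h x y hxy hx => h x hx y fun U hU hxU => ((hT U).1 hU).1 hxy hxU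
  · intro h x hx y hxy
    refine h (by_contra fun hn => ?_) hx
    exact hxy _ ((hT _).2 (scottOpen_not_le y)) hn le_rfl

/-- Well-filteredness for directed subsets of the Smyth powerdomain. -/
theorem smythP_exists_subset [PartialOrder α] [TopologicalSpace α]
    (hT : ∀ U : Set α, IsOpen U ↔ ScottOpen U) (hα : IsDcpo α) {I : Type v}
    {φ : I → α → FinCompacts α} (hφ : IsGeneratingFamily φ)
    {d : Set (SmythP α)} (hd : d.Nonempty) (hdir : DirectedOn (· ≤ ·) d)
    {U : Set α} (hU : ScottOpen U) (hdU : (⋂ Q ∈ d, Q.1) ⊆ U) : ∃ Q ∈ d, Q.1 ⊆ U := by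
  have := hd.to_subtype
  obtain ⟨Q, hQ⟩ := exists_subset_of_iInter_subset hT hα hφ (Q := fun Q : d => Q.1.1)
    (fun Q => Q.1.2.1) (fun Q => Q.1.2.2.1)
    (fun Q => (isSaturatedSet_iff_isUpperSet hT).1 Q.1.2.2.2)
    (fun Q R => by
      obtain ⟨P, hP, hQP, hRP⟩ := hdir Q.1 Q.2 R.1 R.2
      exact ⟨⟨P, hP⟩, hQP, hRP⟩)
    hU (by rwa [← biInter_eq_iInter d fun Q _ => Q.1])
  exact ⟨Q.1, Q.2, hQ⟩

/-- Directed suprema in the Smyth powerdomain exist and are intersections. -/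
theorem smythP_exists_isLUB [PartialOrder α] [TopologicalSpace α]
    (hT : ∀ U : Set α, IsOpen U ↔ ScottOpen U) (hα : IsDcpo α) {I : Type v}
    {φ : I → α → FinCompacts α} (hφ : IsGeneratingFamily φ)
    {d : Set (SmythP α)} (hd : d.Nonempty) (hdir : DirectedOn (· ≤ ·) d) :
    ∃ P : SmythP α, P.1 = (⋂ Q ∈ d, Q.1) ∧ IsLUB d P := by
  refine ⟨⟨⋂ Q ∈ d, Q.1, ?_, ?_, ?_⟩, rfl, ?_, ?_⟩
  · -- Well-filteredness with `U = ∅`.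
    by_contra hempty
    obtain ⟨Q, -, hQ⟩ := smythP_exists_subset hT hα hφ hd hdir ((hT ∅).1 isOpen_empty)
      (not_nonempty_iff_eq_empty.1 hempty).subset
    obtain ⟨x, hx⟩ := Q.2.1
    exact hQ hx
  · refine isCompact_of_finite_subcover fun {ι} U hU hcov => ?_
    obtain ⟨Q, hQd, hQ⟩ := smythP_exists_subset hT hα hφ hd hdir
      ((hT _).1 (isOpen_iUnion hU)) hcov
    obtain ⟨t, ht⟩ := Q.2.2.1.elim_finite_subcover U hU hQ
    exact ⟨t, (biInter_subset_of_mem hQd).trans ht⟩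
  · intro x hx y hxy
    exact mem_iInter₂.2 fun Q hQ => Q.2.2.2 x (mem_iInter₂.1 hx Q hQ) y hxy
  · exact fun Q hQ => biInter_subset_of_mem hQ
  · exact fun R hR => subset_iInter₂ fun Q hQ => hR hQ

/-- The self-map `Q ↦ ⋃ x ∈ Q, φ x` of the Smyth powerdomain induced by a quasi-deflation `φ`. -/
def smythMap [PartialOrder α] [TopologicalSpace α]
    (hT : ∀ U : Set α, IsOpen U ↔ ScottOpen U) {φ : α → FinCompacts α}
    (hφ : IsQuasiDeflation φ) (Q : SmythP α) : SmythP α :=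
  have h := hφ.isFinitaryCompact_lift Q.2.1
  ⟨lift φ Q.1, h.nonempty, h.isCompact hT, (isSaturatedSet_iff_isUpperSet hT).2 h.isUpperSet⟩

theorem isDeflation_smythMap [PartialOrder α] [TopologicalSpace α]
    (hT : ∀ U : Set α, IsOpen U ↔ ScottOpen U) (hα : IsDcpo α) {I : Type v}
    {φ : I → α → FinCompacts α} (hφ : IsGeneratingFamily φ) (i : I) :
    IsDeflation (smythMap hT (hφ.2.2.1 i)) := by
  have hqd := hφ.2.2.1 i
  refine ⟨?_, fun Q => hqd.subset_lift Q.1, ?_⟩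
  · refine @Continuous.mk _ _ (scottTop _) (scottTop _) _ fun S hS => ?_
    have hS : ScottOpen S := hS
    change ScottOpen _
    refine ⟨fun Q R hQR hQ => hS.1 (lift_mono _ hQR) hQ, fun d hd hdir Q hQ hQS => ?_⟩
    obtain ⟨P, hP, hPlub⟩ := smythP_exists_isLUB hT hα hφ hd hdir
    obtain rfl : P = Q := hPlub.unique hQ
    -- The open set `{x | φ i x ⊆ lift (φ i) P}` contains `P`, hence some `R ∈ d`.
    obtain ⟨R, hRd, hR⟩ := smythP_exists_subset hT hα hφ hd hdir
      (hqd.scottOpen_subset (lift (φ i) P.1))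
      (by
        rw [← hP]
        exact fun x hx => subset_biUnion_of_mem (u := fun x => (φ i x).1) hx)
    refine ⟨R, hRd, hS.1 ?_ hQS⟩
    exact iUnion₂_subset fun x hx => hR hx
  · refine Set.Finite.of_finite_image (f := Subtype.val)
      (hqd.finite_range_lift.subset ?_) Subtype.val_injective.injOn
    rintro _ ⟨_, ⟨Q, rfl⟩, rfl⟩
    exact ⟨Q.1, rfl⟩

end Proof

/-- For every QRB-domain `X`, the Smyth powerdomain (nonempty compact saturated
subsets of `X` ordered by reverse inclusion) is an RB-domain. -/
theorem smyth_of_QRB_is_RB {X : Type u} [PartialOrder X] (hX : IsQRBDomain X) :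
    letI : TopologicalSpace X := scottTop X
    IsRBDomain (SmythP X) := by
  letI : TopologicalSpace X := scottTop X
  have hT : ∀ U : Set X, IsOpen U ↔ ScottOpen U := fun U => Iff.rfl
  obtain ⟨hdcpo, ⟨b, hb⟩, I, φ, hφ⟩ := hX
  refine ⟨fun d hd hdir => ?_, ?_, I, fun i => smythMap hT (hφ.2.2.1 i), hφ.1, fun i j => ?_,
    isDeflation_smythMap hT hdcpo hφ, fun Q => ⟨?_, fun R hR => ?_⟩⟩
  · obtain ⟨P, -, hP⟩ := smythP_exists_isLUB hT hdcpo hφ hd hdir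
    exact ⟨P, hP⟩
  · -- The bottom element is the whole space, which is `↑b`.
    have hfc : IsFinitaryCompact (univ : Set X) :=
      ⟨{b}, finite_singleton b, singleton_nonempty b,
        subset_antisymm (fun x _ => ⟨b, rfl, hb x⟩) (subset_univ _)⟩
    exact ⟨⟨univ, hfc.nonempty, hfc.isCompact hT, fun _ _ _ _ => trivial⟩,
      fun Q => subset_univ Q.1⟩
  · obtain ⟨k, hki, hkj⟩ := hφ.2.1 i j
    exact ⟨k, fun Q => biUnion_mono subset_rfl fun x _ => hki x,
      fun Q => biUnion_mono subset_rfl fun x _ => hkj x⟩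
  · rintro _ ⟨i, rfl⟩
    exact (hφ.2.2.1 i).subset_lift Q.1
  · have hQ := iInter_lift hT hφ Q.2.2.1 ((isSaturatedSet_iff_isUpperSet hT).1 Q.2.2.2)
    change R.1 ⊆ Q.1
    rw [← hQ]
    exact subset_iInter fun i => hR ⟨i, rfl⟩
end

section
/- Let X be a QRB-domain (with its Scott topology) and Y a T0 topological space that is a quasi-retract of X. Then Y, ordered by its specialization ordering, is a QRB-domain, and the topology of Y is the Scott topology of this ordering. Moreover, if X is an ωQRB-domain, then so is Y. -/
/-!
Let `ς` be a quasi-section of `r` and `φ i` a generating family of quasi-deflations on `X`. The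
generating family on `Y` is `ψ i y = ↑ r (⋃ x ∈ ς y, φ i x)`; each `ψ i y` is finitary because
`φ i` has finite image.

* Rudin's lemma (`rudin`): in a dcpo, a filtered family of finitary compacts whose intersection
  lies in a Scott-open set `U` has a member contained in `U`. By Zorn's lemma one takes a minimal
  lower set disjoint from `U` meeting every member; minimality makes it directed, and its supremum
  gives a contradiction.
* Hence `{A | A ⊆ U}` is Scott open in `Fin(X)`, and a compactness argument
  (`exists_smear_subset`) shows that every open neighbourhood of a compact `Q` contains
  `⋃ x ∈ Q, φ i x` for some `i`. It follows that `X` is well-filtered (`wellFiltered`) and that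
  each open neighbourhood of `y` contains some `ψ i y`, so that `⋂ i, ψ i y = ↑y`.
* Let `d ⊆ Y` be directed. If no point `r x` with `x ∈ ⋂ z ∈ d, ς z` were a limit of `d`, open
  neighbourhoods of these points missing `d` would cover `r (ς z)` for some `z ∈ d` by
  well-filteredness, hence would contain `z`, which is absurd. A limit of `d` above `d` is its
  supremum. So `Y` is a dcpo whose open sets are Scott open (`exists_limit`).
* As `φ i` has finite image, `{y' | ψ i y' ⊆ ψ i y}` is a neighbourhood of `y` (`psi_nhd`). This
  gives the continuity of `ψ i`, and, with Rudin's lemma in `Y`, shows that Scott-open subsets of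
  `Y` are open.
-/


open Set TopologicalSpace

universe u v

namespace QRB

/-! ### Rudin's lemma and finitary compacts -/

section Rudin

variable {X : Type*} [PartialOrder X]

lemma IsFinitaryCompact.isUpperSet {A : Set X} (hA : IsFinitaryCompact A) : IsUpperSet A := by
  obtain ⟨E, -, -, rfl⟩ := hA
  rintro a b hab ⟨e, he, hea⟩
  exact ⟨e, he, hea.trans hab⟩

/-- Rudin's lemma, in the form: finitary compacts of a dcpo are well-filtered. -/
lemma rudin (hX : IsDcpo X) {ι : Type*} [Nonempty ι] (Q : ι → Set X)
    (hQ : ∀ i, IsFinitaryCompact (Q i)) (hdir : ∀ i j, ∃ k, Q k ⊆ Q i ∧ Q k ⊆ Q j)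
    {U : Set X} (hU : ScottOpen U) (hsub : (⋂ i, Q i) ⊆ U) : ∃ i, Q i ⊆ U := by
  by_contra! hcon
  obtain ⟨L, hLmin⟩ := zorn_superset
    {L : Set X | IsLowerSet L ∧ L ⊆ Uᶜ ∧ ∀ i, (L ∩ Q i).Nonempty} (by
      intro c hc hchain
      rcases c.eq_empty_or_nonempty with rfl | hne
      · refine ⟨Uᶜ, ⟨hU.1.compl, subset_rfl, fun i => ?_⟩, by simp⟩
        obtain ⟨x, hx, hxU⟩ := Set.not_subset.1 (hcon i)
        exact ⟨x, hxU, hx⟩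
      refine ⟨⋂₀ c, ⟨isLowerSet_sInter fun s hs => (hc hs).1, ?_, fun i => ?_⟩,
        fun s hs => sInter_subset_of_mem hs⟩
      · obtain ⟨s, hs⟩ := hne
        exact (sInter_subset_of_mem hs).trans (hc hs).2.1
      obtain ⟨E, hE, -, hQE⟩ := hQ i
      by_contra hemp
      -- a finite `E` covered by the complements of the chain is covered by one of them
      obtain ⟨t, ht, hEt⟩ := DirectedOn.exists_mem_subset_of_finite_of_subset_sUnion
        (s := E) (c := compl '' c) (hne.image _) (by
          rintro _ ⟨s, hs, rfl⟩ _ ⟨t, ht, rfl⟩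
          rcases hchain.total hs ht with h | h
          · exact ⟨_, ⟨s, hs, rfl⟩, subset_rfl, compl_subset_compl.2 h⟩
          · exact ⟨_, ⟨t, ht, rfl⟩, compl_subset_compl.2 h, subset_rfl⟩) hE (by
          intro e he
          by_contra hen
          refine hemp ⟨e, ?_, hQE ▸ ⟨e, he, le_rfl⟩⟩
          intro s hs
          by_contra hes
          exact hen ⟨sᶜ, ⟨s, hs, rfl⟩, hes⟩)
      obtain ⟨s, hs, rfl⟩ := ht
      obtain ⟨x, hxs, hxQ⟩ := (hc hs).2.2 i
      rw [hQE] at hxQ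
      obtain ⟨e, he, hex⟩ := hxQ
      exact hEt he ((hc hs).1 hex hxs))
  obtain ⟨hLlow, hLU, hLQ⟩ := hLmin.prop
  -- removing a principal filter from the minimal `L` must lose some `Q i`
  have key : ∀ a ∈ L, ∃ i, ∀ x ∈ L, x ∈ Q i → a ≤ x := by
    intro a ha
    by_contra! h
    have hmem : L \ Set.Ici a ∈
        {L : Set X | IsLowerSet L ∧ L ⊆ Uᶜ ∧ ∀ i, (L ∩ Q i).Nonempty} := by
      refine ⟨fun x y hyx hx => ⟨hLlow hyx hx.1, fun hay => hx.2 (le_trans hay hyx)⟩,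
        sdiff_subset.trans hLU, fun i => ?_⟩
      obtain ⟨x, hxL, hxQ, hax⟩ := h i
      exact ⟨x, ⟨hxL, hax⟩, hxQ⟩
    exact (hLmin.le_of_le hmem sdiff_subset ha).2 le_rfl
  have hLdir : DirectedOn (· ≤ ·) L := by
    intro a ha b hb
    obtain ⟨i, hi⟩ := key a ha
    obtain ⟨j, hj⟩ := key b hb
    obtain ⟨k, hki, hkj⟩ := hdir i j
    obtain ⟨x, hxL, hxQ⟩ := hLQ k
    exact ⟨x, hxL, hi x hxL (hki hxQ), hj x hxL (hkj hxQ)⟩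
  have hLne : L.Nonempty := (hLQ (Classical.arbitrary ι)).mono inter_subset_left
  obtain ⟨s, hs⟩ := hX L hLne hLdir
  have hsU : s ∈ U := hsub <| mem_iInter.2 fun i => by
    obtain ⟨x, hxL, hxQ⟩ := hLQ i
    exact IsFinitaryCompact.isUpperSet (hQ i) (hs.1 hxL) hxQ
  obtain ⟨x, hxL, hxU⟩ := hU.2 L hLne hLdir s hs hsU
  exact hLU hxL hxU

lemma isFinitaryCompact_Ici (x : X) : IsFinitaryCompact (Set.Ici x) :=
  ⟨{x}, finite_singleton x, singleton_nonempty x, by ext; simp [upClos]⟩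

/-- The sets `◻U` are Scott open in `Fin(X)`: a directed supremum in `Fin(X)` is an
intersection, so Rudin's lemma applies. -/
lemma scottOpen_box (hX : IsDcpo X) {U : Set X} (hU : ScottOpen U) :
    ScottOpen {A : FinCompacts X | A.1 ⊆ U} := by
  refine ⟨fun A B hAB hA => Subset.trans hAB hA, fun d hne hdir A hA hAU => ?_⟩
  have : Nonempty d := hne.to_subtype
  obtain ⟨B, hB⟩ := rudin hX (fun B : d => B.1.1) (fun B => B.1.2) (fun B C => by
    obtain ⟨D, hD, hBD, hCD⟩ := hdir B B.2 C C.2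
    exact ⟨⟨D, hD⟩, hBD, hCD⟩) hU (fun x hx => by
      have hub : (⟨Set.Ici x, isFinitaryCompact_Ici x⟩ : FinCompacts X) ∈ upperBounds d :=
        fun B hB y hy => IsFinitaryCompact.isUpperSet B.2 hy (mem_iInter.1 hx ⟨B, hB⟩)
      exact hAU (hA.2 hub (self_mem_Ici (a := x))))
  exact ⟨B.1, B.2, hB⟩

/-- The complement of a principal ideal is Scott open. -/
lemma scottOpen_not_le (a : X) : ScottOpen {b : X | ¬ b ≤ a} := by
  refine ⟨fun b c hbc hb hc => hb (hbc.trans hc), fun d _ _ s hs hsa => ?_⟩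
  by_contra h
  refine hsa (hs.2 fun b hb => ?_)
  by_contra hba
  exact h ⟨b, hb, hba⟩

lemma isFinitaryCompact_biUnion {ι : Type*} (A : ι → FinCompacts X) (hA : (range A).Finite)
    {Q : Set ι} (hQ : Q.Nonempty) : IsFinitaryCompact (⋃ x ∈ Q, (A x).1) := by
  choose E hEf hEn hE using fun T : FinCompacts X => T.2
  refine ⟨⋃ T ∈ A '' Q, E T, (hA.subset (image_subset_range A Q)).biUnion fun T _ => hEf T, ?_, ?_⟩
  · obtain ⟨x, hx⟩ := hQ
    obtain ⟨e, he⟩ := hEn (A x)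
    exact ⟨e, mem_biUnion (mem_image_of_mem A hx) he⟩
  · ext z
    simp only [mem_iUnion, exists_prop, upClos, mem_ofPred_eq, exists_mem_image]
    constructor
    · rintro ⟨x, hx, hz⟩
      rw [hE (A x)] at hz
      obtain ⟨e, he, hez⟩ := hz
      exact ⟨e, ⟨x, hx, he⟩, hez⟩
    · rintro ⟨e, ⟨x, hx, he⟩, hez⟩
      refine ⟨x, hx, ?_⟩
      rw [hE (A x)]
      exact ⟨e, he, hez⟩

end Rudin

/-! ### Compact saturated sets in a QRB-domain -/

section Domain

variable {X : Type*} [PartialOrder X] [tX : TopologicalSpace X]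

/-- In the Scott topology, the specialization ordering is the original one. -/
lemma specLE_iff (htX : tX = scottTop X) {a b : X} : specLE a b ↔ a ≤ b := by
  subst htX
  constructor
  · intro h
    by_contra hab
    exact h _ (scottOpen_not_le b) hab le_rfl
  · intro hab U hU ha
    exact hU.1 hab ha

/-- `{x' | φ x' ⊆ φ x}` is open: since `φ` has finite image, only finitely many values
have to be excluded, each by a Scott-open set. -/
lemma isOpen_le_quasiDeflation (htX : tX = scottTop X) {φ : X → FinCompacts X}
    (hφ : IsQuasiDeflation φ) (x : X) : IsOpen {x' | (φ x').1 ⊆ (φ x).1} := by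
  have heq : {x' | (φ x').1 ⊆ (φ x).1} =
      ⋂ T ∈ {T ∈ range φ | ¬ φ x ≤ T}, φ ⁻¹' {S | ¬ S ≤ T} := by
    ext x'
    simp only [mem_iInter]
    constructor
    · intro h T hT hle
      exact hT.2 (le_trans (show φ x ≤ φ x' from h) hle)
    · intro h
      by_contra hn
      exact h (φ x') ⟨mem_range_self x', hn⟩ le_rfl
  rw [heq]
  exact (hφ.2.2.subset (sep_subset _ _)).isOpen_biInter fun T _ => by
    subst htX
    exact continuous_def.1 hφ.1 _ (scottOpen_not_le T)

variable {I : Type*} {φ : I → X → FinCompacts X}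

/-- Every open neighbourhood of a compact set `Q` contains `⋃ x ∈ Q, φ i x` for some `i`. -/
lemma exists_smear_subset (htX : tX = scottTop X) (hX : IsDcpo X) (hφ : IsGeneratingFamily φ)
    {Q U : Set X} (hQ : IsCompact Q) (hU : IsOpen U) (hQU : Q ⊆ U) :
    ∃ i, (⋃ x ∈ Q, (φ i x).1) ⊆ U := by
  have hUs : ScottOpen U := by subst htX; exact hU
  obtain ⟨hI, hdir, hdef, hgen⟩ := hφ
  obtain ⟨i, hi⟩ := hQ.elim_directed_cover (fun i => {x | (φ i x).1 ⊆ U})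
    (fun i => by
      subst htX
      exact continuous_def.1 (hdef i).1 _ (scottOpen_box hX hUs))
    (fun x hx => by
      obtain ⟨i, hi⟩ := rudin hX (fun i => (φ i x).1) (fun i => (φ i x).2)
        (fun i j => by
          obtain ⟨k, h1, h2⟩ := hdir i j
          exact ⟨k, h1 x, h2 x⟩) hUs (by
          rw [hgen x]
          exact fun y hy => hUs.1 hy (hQU hx))
      exact mem_iUnion.2 ⟨i, hi⟩)
    (fun i j => by
      obtain ⟨k, h1, h2⟩ := hdir i j
      exact ⟨k, fun x hx => (h1 x).trans hx, fun x hx => (h2 x).trans hx⟩)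
  exact ⟨i, iUnion₂_subset fun x hx => hi hx⟩

/-- A QRB-domain is well-filtered. -/
lemma wellFiltered (htX : tX = scottTop X) (hX : IsDcpo X) (hφ : IsGeneratingFamily φ)
    {J : Type*} [Nonempty J] (Q : J → SmythP X)
    (hQ : ∀ i j, ∃ k, (Q k).1 ⊆ (Q i).1 ∧ (Q k).1 ⊆ (Q j).1)
    {U : Set X} (hU : IsOpen U) (hsub : (⋂ j, (Q j).1) ⊆ U) : ∃ j, (Q j).1 ⊆ U := by
  have hI : Nonempty I := hφ.1
  obtain ⟨⟨i, j⟩, hij⟩ := rudin hX (fun p : I × J => ⋃ x ∈ (Q p.2).1, (φ p.1 x).1)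
    (fun p => isFinitaryCompact_biUnion _ (hφ.2.2.1 p.1).2.2 (Q p.2).2.1)
    (fun p q => by
      obtain ⟨k, h1, h2⟩ := hφ.2.1 p.1 q.1
      obtain ⟨l, h3, h4⟩ := hQ p.2 q.2
      exact ⟨(k, l), biUnion_mono h3 fun x _ => h1 x, biUnion_mono h4 fun x _ => h2 x⟩)
    (U := U) (by subst htX; exact hU) (by
      refine Subset.trans (fun x hx => mem_iInter.2 fun j => ?_) hsub
      -- if `x ∉ Q j` then the saturated set `Q j` lies in the open set of points not below `x`
      by_contra hxQ
      obtain ⟨i, hi⟩ := exists_smear_subset htX hX hφ (Q j).2.2.1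
        (U := {b | ¬ b ≤ x}) (by subst htX; exact scottOpen_not_le x)
        (fun b hb hbx => hxQ ((Q j).2.2.2 b hb x ((specLE_iff htX).2 hbx)))
      exact hi (mem_iInter.1 hx (i, j)) le_rfl)
  exact ⟨j, fun x hx => hij (mem_biUnion hx ((hφ.2.2.1 i).2.1 x))⟩

end Domain

/-! ### Quasi-retracts -/

section Retract

variable {X Y : Type*} [PartialOrder X] [tX : TopologicalSpace X]
  [PartialOrder Y] [tY : TopologicalSpace Y]
  {I : Type*} {φ : I → X → FinCompacts X} {r : X → Y} {ς : Y → SmythP X}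

omit [PartialOrder X] [PartialOrder Y] in
lemma isOpen_box_preimage (hς : Continuous ς) {U : Set X} (hU : IsOpen U) :
    IsOpen {y | (ς y).1 ⊆ U} :=
  hς.isOpen_preimage {Q | Q.1 ⊆ U} (isOpen_generateFrom_of_mem ⟨U, hU, rfl⟩)

lemma monotone_of_continuous (htX : tX = scottTop X) (hY : ∀ a b : Y, a ≤ b ↔ specLE a b)
    (hr : Continuous r) : Monotone r := fun _ _ hab =>
  (hY _ _).2 fun _ hU ha => (specLE_iff htX).2 hab _ (hU.preimage hr) ha

lemma antitone_section (htX : tX = scottTop X) (hY : ∀ a b : Y, a ≤ b ↔ specLE a b)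
    (hς : Continuous ς) {y z : Y} (hyz : y ≤ z) : (ς z).1 ⊆ (ς y).1 := by
  intro x hx
  by_contra hxy
  have hopen : IsOpen {b : X | ¬ b ≤ x} := by subst htX; exact scottOpen_not_le x
  exact (hY _ _).1 hyz _ (isOpen_box_preimage hς hopen)
    (fun b hb hbx => hxy ((ς y).2.2.2 b hb x ((specLE_iff htX).2 hbx))) hx le_rfl

omit [PartialOrder X] in
/-- The quasi-retraction identity `↑r(ς y) = ↑y`, split into its two halves: `r` maps `ς y`
above `y`, and some point of `ς y` is mapped below `y`. -/
lemma section_spec (hY : ∀ a b : Y, a ≤ b ↔ specLE a b)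
    (hrς : ∀ y, specUpSet (r '' (ς y).1) = specUp y) (y : Y) :
    (∀ x ∈ (ς y).1, y ≤ r x) ∧ ∃ x ∈ (ς y).1, r x ≤ y := by
  constructor
  · intro x hx
    have h : r x ∈ specUpSet (r '' (ς y).1) := ⟨r x, mem_image_of_mem r hx, fun _ _ h => h⟩
    rw [hrς y] at h
    exact (hY _ _).2 h
  · have h : y ∈ specUp y := fun _ _ h => h
    rw [← hrς y] at h
    obtain ⟨_, ⟨x, hx, rfl⟩, hxy⟩ := h
    exact ⟨x, hx, (hY _ _).2 hxy⟩

/-- A directed subset of `Y` has an upper bound all of whose neighbourhoods meet it. -/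
lemma exists_limit (htX : tX = scottTop X) (hX : IsDcpo X) (hφ : IsGeneratingFamily φ)
    (hY : ∀ a b : Y, a ≤ b ↔ specLE a b) (hr : Continuous r) (hς : Continuous ς)
    (hrς : ∀ y, specUpSet (r '' (ς y).1) = specUp y)
    {d : Set Y} (hne : d.Nonempty) (hdir : DirectedOn (· ≤ ·) d) :
    ∃ w, IsLUB d w ∧ ∀ V, IsOpen V → w ∈ V → (d ∩ V).Nonempty := by
  have hspec := section_spec hY hrς
  have : Nonempty d := hne.to_subtype
  have hlim : ∃ x ∈ ⋂ z : d, (ς z).1, ∀ V, IsOpen V → r x ∈ V → (d ∩ V).Nonempty := by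
    by_contra! hcon
    choose! V hVo hV hVd using hcon
    have hVemp : ∀ x ∈ ⋂ z : d, (ς z).1, ∀ y ∈ d, y ∉ V x := fun x hx y hy hyV => by
      have : y ∈ d ∩ V x := ⟨hy, hyV⟩
      simp [hVd x hx] at this
    obtain ⟨z, hz⟩ := wellFiltered htX hX hφ (fun z : d => ς z) (fun a b => by
      obtain ⟨c, hc, hac, hbc⟩ := hdir a a.2 b b.2
      exact ⟨⟨c, hc⟩, antitone_section htX hY hς hac, antitone_section htX hY hς hbc⟩)
      (U := r ⁻¹' ⋃ x ∈ ⋂ z : d, (ς z).1, V x)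
      ((isOpen_biUnion fun x hx => hVo x hx).preimage hr)
      (fun x hx => mem_biUnion hx (hV x hx))
    obtain ⟨a, ha, haz⟩ := (hspec z).2
    obtain ⟨x, hx, hax⟩ := mem_iUnion₂.1 (hz ha)
    exact hVemp x hx z z.2 ((hY _ _).1 haz _ (hVo x hx) hax)
  obtain ⟨x, hx, hlimx⟩ := hlim
  refine ⟨r x, ⟨fun z hz => (hspec z).1 x (mem_iInter.1 hx ⟨z, hz⟩), fun w hw => ?_⟩, hlimx⟩
  refine (hY _ _).2 fun V hV hxV => ?_
  obtain ⟨z, hz, hzV⟩ := hlimx V hV hxV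
  exact (hY _ _).1 (hw hz) V hV hzV

/-- The finitary compact `ψ y = ↑ r (⋃ x ∈ ς y, φ x)` induced on `Y` by a quasi-deflation `φ`
on `X`. -/
def psiSet (r : X → Y) (ς : Y → SmythP X) (φ : X → FinCompacts X) (y : Y) : Set Y :=
  upClos (r '' ⋃ x ∈ (ς y).1, (φ x).1)

omit tY in
lemma psiSet_mono {φ₁ φ₂ : X → FinCompacts X} {y z : Y}
    (h : (⋃ x ∈ (ς y).1, (φ₁ x).1) ⊆ ⋃ x ∈ (ς z).1, (φ₂ x).1) :
    psiSet r ς φ₁ y ⊆ psiSet r ς φ₂ z := by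
  rintro w ⟨e, he, hew⟩
  exact ⟨e, image_mono h he, hew⟩

omit tY in
lemma isFinitaryCompact_psiSet (hr : Monotone r) {φ : X → FinCompacts X}
    (hφ : IsQuasiDeflation φ) (y : Y) : IsFinitaryCompact (psiSet r ς φ y) := by
  obtain ⟨E, hEf, hEn, hE⟩ := isFinitaryCompact_biUnion φ hφ.2.2 (ς y).2.1
  refine ⟨r '' E, hEf.image r, hEn.image r, ?_⟩
  rw [psiSet, hE]
  ext w
  constructor
  · rintro ⟨_, ⟨x, ⟨e, he, hex⟩, rfl⟩, hxw⟩
    exact ⟨r e, mem_image_of_mem r he, (hr hex).trans hxw⟩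
  · rintro ⟨_, ⟨e, he, rfl⟩, hew⟩
    exact ⟨r e, ⟨e, ⟨e, he, le_rfl⟩, rfl⟩, hew⟩

lemma mem_psiSet (hY : ∀ a b : Y, a ≤ b ↔ specLE a b)
    (hrς : ∀ y, specUpSet (r '' (ς y).1) = specUp y) {φ : X → FinCompacts X}
    (hφ : IsQuasiDeflation φ) (y : Y) : y ∈ psiSet r ς φ y := by
  obtain ⟨x, hx, hxy⟩ := (section_spec hY hrς y).2
  exact ⟨r x, ⟨x, mem_biUnion hx (hφ.2.1 x), rfl⟩, hxy⟩

/-- Near `y`, the values of `ψ` are contained in `ψ y`. -/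
lemma psi_nhd (htX : tX = scottTop X) (hς : Continuous ς) {φ : X → FinCompacts X}
    (hφ : IsQuasiDeflation φ) (y : Y) :
    ∃ V : Set Y, IsOpen V ∧ y ∈ V ∧ ∀ z ∈ V, psiSet r ς φ z ⊆ psiSet r ς φ y := by
  refine ⟨{z | (ς z).1 ⊆ ⋃ x ∈ (ς y).1, {x' | (φ x').1 ⊆ (φ x).1}},
    isOpen_box_preimage hς (isOpen_biUnion fun x _ => isOpen_le_quasiDeflation htX hφ x),
    fun x hx => mem_biUnion hx Subset.rfl, fun z hz => psiSet_mono ?_⟩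
  refine iUnion₂_subset fun a ha => ?_
  obtain ⟨x, hx, hax⟩ := mem_iUnion₂.1 (hz ha)
  exact Subset.trans hax (subset_biUnion_of_mem (u := fun x => (φ x).1) hx)

/-- Every open neighbourhood of `y` contains some `ψ i y`. -/
lemma exists_psi_subset (htX : tX = scottTop X) (hX : IsDcpo X) (hφ : IsGeneratingFamily φ)
    (hY : ∀ a b : Y, a ≤ b ↔ specLE a b) (hr : Continuous r)
    (hrς : ∀ y, specUpSet (r '' (ς y).1) = specUp y) {y : Y} {V : Set Y} (hV : IsOpen V)
    (hy : y ∈ V) : ∃ i, psiSet r ς (φ i) y ⊆ V := by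
  obtain ⟨i, hi⟩ := exists_smear_subset htX hX hφ (ς y).2.2.1 (hV.preimage hr)
    (fun x hx => (hY _ _).1 ((section_spec hY hrς y).1 x hx) V hV hy)
  refine ⟨i, ?_⟩
  rintro w ⟨_, ⟨x, hx, rfl⟩, hxw⟩
  exact (hY _ _).1 hxw V hV (hi hx)

lemma iInter_psiSet (htX : tX = scottTop X) (hX : IsDcpo X) (hφ : IsGeneratingFamily φ)
    (hY : ∀ a b : Y, a ≤ b ↔ specLE a b) (hr : Continuous r)
    (hrς : ∀ y, specUpSet (r '' (ς y).1) = specUp y) (y : Y) :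
    ⋂ i, psiSet r ς (φ i) y = Set.Ici y := by
  apply Subset.antisymm
  · intro w hw
    refine (hY _ _).2 fun V hV hyV => ?_
    obtain ⟨i, hi⟩ := exists_psi_subset htX hX hφ hY hr hrς hV hyV
    exact hi (mem_iInter.1 hw i)
  · intro w hyw
    refine mem_iInter.2 fun i => ?_
    exact IsFinitaryCompact.isUpperSet
      (isFinitaryCompact_psiSet (monotone_of_continuous htX hY hr) (hφ.2.2.1 i) y) hyw
      (mem_psiSet hY hrς (hφ.2.2.1 i) y)

omit tY in
lemma directed_psiSet (hφ : IsGeneratingFamily φ) (i j : I) :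
    ∃ k, (∀ y, psiSet r ς (φ k) y ⊆ psiSet r ς (φ i) y) ∧
      ∀ y, psiSet r ς (φ k) y ⊆ psiSet r ς (φ j) y := by
  obtain ⟨k, h1, h2⟩ := hφ.2.1 i j
  exact ⟨k, fun y => psiSet_mono (biUnion_mono Subset.rfl fun x _ => h1 x),
    fun y => psiSet_mono (biUnion_mono Subset.rfl fun x _ => h2 x)⟩

lemma isDcpo_retract (htX : tX = scottTop X) (hX : IsDcpo X) (hφ : IsGeneratingFamily φ)
    (hY : ∀ a b : Y, a ≤ b ↔ specLE a b) (hr : Continuous r) (hς : Continuous ς)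
    (hrς : ∀ y, specUpSet (r '' (ς y).1) = specUp y) : IsDcpo Y := fun _ hne hdir =>
  (exists_limit htX hX hφ hY hr hς hrς hne hdir).imp fun _ h => h.1

/-- The topology of a quasi-retract is the Scott topology of its specialization ordering. -/
lemma topology_eq (htX : tX = scottTop X) (hX : IsDcpo X) (hφ : IsGeneratingFamily φ)
    (hY : ∀ a b : Y, a ≤ b ↔ specLE a b) (hr : Continuous r) (hς : Continuous ς)
    (hrς : ∀ y, specUpSet (r '' (ς y).1) = specUp y) : tY = scottTop Y := by
  refine TopologicalSpace.ext_iff.2 fun V => ⟨fun hV => ⟨?_, ?_⟩, fun hV => ?_⟩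
  · exact fun a b hab ha => (hY _ _).1 hab V hV ha
  · intro d hne hdir a ha haV
    obtain ⟨w, hw, hlim⟩ := exists_limit htX hX hφ hY hr hς hrς hne hdir
    exact hlim V hV (hw.unique ha ▸ haV)
  · refine isOpen_iff_mem_nhds.2 fun y hy => ?_
    have : Nonempty I := hφ.1
    obtain ⟨i, hi⟩ := rudin (isDcpo_retract htX hX hφ hY hr hς hrς)
      (fun i => psiSet r ς (φ i) y)
      (fun i => isFinitaryCompact_psiSet (monotone_of_continuous htX hY hr) (hφ.2.2.1 i) y)
      (fun i j => by
        obtain ⟨k, h1, h2⟩ := directed_psiSet (r := r) (ς := ς) hφ i j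
        exact ⟨k, h1 y, h2 y⟩) (U := V) hV (by
        rw [iInter_psiSet htX hX hφ hY hr hrς y]
        exact fun z hz => hV.1 hz hy)
    obtain ⟨W, hW, hyW, hsub⟩ := psi_nhd (r := r) htX hς (hφ.2.2.1 i) y
    exact Filter.mem_of_superset (hW.mem_nhds hyW) fun z hz =>
      hi (hsub z hz (mem_psiSet hY hrς (hφ.2.2.1 i) z))

lemma exists_generatingFamily (htX : tX = scottTop X) (hX : IsDcpo X)
    (hφ : IsGeneratingFamily φ) (hY : ∀ a b : Y, a ≤ b ↔ specLE a b) (hr : Continuous r)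
    (hς : Continuous ς) (hrς : ∀ y, specUpSet (r '' (ς y).1) = specUp y) :
    ∃ ψ : I → Y → FinCompacts Y, IsGeneratingFamily ψ := by
  refine ⟨fun i y => ⟨psiSet r ς (φ i) y,
    isFinitaryCompact_psiSet (monotone_of_continuous htX hY hr) (hφ.2.2.1 i) y⟩,
    hφ.1, directed_psiSet hφ, fun i => ⟨?_, mem_psiSet hY hrς (hφ.2.2.1 i), ?_⟩,
    iInter_psiSet htX hX hφ hY hr hrς⟩
  · rw [← topology_eq htX hX hφ hY hr hς hrς]
    refine @Continuous.mk _ _ _ (scottTop _) _ fun W hW => isOpen_iff_mem_nhds.2 fun y hy => ?_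
    obtain ⟨V, hV, hyV, hsub⟩ := psi_nhd (r := r) htX hς (hφ.2.2.1 i) y
    exact Filter.mem_of_superset (hV.mem_nhds hyV) fun z hz => hW.1 (hsub z hz) hy
  · -- `ψ i y` only depends on the subset `φ i '' ς y` of the finite image of `φ i`
    refine Set.Finite.of_finite_image (f := Subtype.val) ?_ Subtype.val_injective.injOn
    refine (((hφ.2.2.1 i).2.2.finite_subsets).image
      fun s => upClos (r '' ⋃ T ∈ s, T.1)).subset ?_
    rintro _ ⟨_, ⟨y, rfl⟩, rfl⟩
    exact ⟨φ i '' (ς y).1, image_subset_range _ _, by simp only [psiSet, biUnion_image]⟩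

end Retract

/-- A generating family may be indexed by its own range, which lives in the universe of the
domain. -/
lemma generatingFamily_range {Y : Type*} [PartialOrder Y] {I : Type*} {ψ : I → Y → FinCompacts Y}
    (hψ : IsGeneratingFamily ψ) :
    IsGeneratingFamily (fun f : range ψ => f.1) := by
  obtain ⟨hI, hdir, hdef, hgen⟩ := hψ
  refine ⟨(range_nonempty ψ).to_subtype, ?_, ?_, fun y => ?_⟩
  · rintro ⟨_, i, rfl⟩ ⟨_, j, rfl⟩
    obtain ⟨k, hk⟩ := hdir i j
    exact ⟨⟨_, k, rfl⟩, hk⟩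
  · rintro ⟨_, i, rfl⟩
    exact hdef i
  · rw [← hgen y]
    ext z
    simp

end QRB

/-- A T0 quasi-retract `Y` of a QRB-domain `X`, under its specialization ordering, is
a QRB-domain whose Scott topology is the topology of `Y`; if `X` is an ωQRB-domain,
so is `Y`. -/
theorem quasiRetract_of_QRB {X : Type u} {Y : Type v} [PartialOrder X]
    [tY : TopologicalSpace Y] [T0Space Y] (hX : IsQRBDomain X)
    (r : X → Y) (hr : @IsQuasiRetraction X Y (scottTop X) tY r) :
    letI : PartialOrder Y := specOrder Y
    IsQRBDomain Y ∧ tY = scottTop Y ∧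
      (IsOmegaQRBDomain X → IsOmegaQRBDomain Y) := by
  let : PartialOrder Y := specOrder Y
  let tX : TopologicalSpace X := scottTop X
  have hY : ∀ a b : Y, a ≤ b ↔ specLE a b := fun a b => Iff.rfl
  obtain ⟨hr, ς, hς, hrς⟩ := hr
  obtain ⟨hdX, ⟨b, hb⟩, I, φ, hφ⟩ := hX
  have hdY : IsDcpo Y := QRB.isDcpo_retract rfl hdX hφ hY hr hς hrς
  have hbot : ∃ b : Y, ∀ y, b ≤ y := ⟨r b, fun y => by
    obtain ⟨x, -, hxy⟩ := (QRB.section_spec hY hrς y).2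
    exact (QRB.monotone_of_continuous rfl hY hr (hb x)).trans hxy⟩
  refine ⟨⟨hdY, hbot, ?_⟩, QRB.topology_eq rfl hdX hφ hY hr hς hrς, ?_⟩
  · obtain ⟨ψ, hψ⟩ := QRB.exists_generatingFamily rfl hdX hφ hY hr hς hrς
    exact ⟨_, _, QRB.generatingFamily_range hψ⟩
  · rintro ⟨-, -, J, hJ, φ', hφ'⟩
    obtain ⟨ψ, hψ⟩ := QRB.exists_generatingFamily rfl hdX hφ' hY hr hς hrς
    exact ⟨hdY, hbot, _, (countable_range ψ).to_subtype, _, QRB.generatingFamily_range hψ⟩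
end

section
/- Every T0 quasi-retract of a stably compact space is stably compact. -/
/-!
Let `r : X → Y` be a quasi-retraction with quasi-section `ς`. The operator
`pre U = {y | ς y ⊆ U}` sends opens of `X` to opens of `Y`, preserves finite intersections, and
preserves directed unions since each `ς y` is compact. The equation `↑ r(ς y) = ↑y` says that
`pre (r ⁻¹ V) = V` for `V` open in `Y`. Each property of `Y` then descends from `X`.

* Compactness and local compactness: `Y = ↑ r(X)`; and if `y ∈ V`, choose a compact `L` with
  `ς y ⊆ interior L ⊆ L ⊆ r ⁻¹ V`, so that `↑ r(L) ⊆ V` is compact and contains the open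
  neighborhood `pre (interior L)` of `y`.
* Sobriety: let `C` be irreducible closed in `Y`. The opens `W` of `X` such that `pre W` meets `C`
  form a Scott-open filter, and `r ⁻¹ Cᶜ` is not one of them. As in the proof of the
  Hofmann–Mislove theorem, `r ⁻¹ Cᶜ` lies in a maximal open set `M` outside the filter, and `Mᶜ` is
  irreducible. If `x` is its generic point, then `r x` is generic in `C`.
* Coherence: for `Q` compact saturated in `Y`, the set `K = ⋃ y ∈ Q, ς y` is compact saturated in
  `X`. If `K₁`, `K₂` come from `Q₁`, `Q₂`, then `Q₁ ∩ Q₂ = ↑ r(K₁ ∩ K₂)`, which is compact.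
-/

open Set TopologicalSpace

universe u v

section QuasiRetract

variable {X : Type u} {Y : Type v} [TopologicalSpace X] [TopologicalSpace Y]

/-- A set lying between a compact set and its upward closure is compact. -/
theorem isCompact_of_subset_specUpSet {A B : Set X} (hA : IsCompact A) (hAB : A ⊆ B)
    (hBA : B ⊆ specUpSet A) : IsCompact B := by
  refine isCompact_of_finite_subcover fun U hU hBU => ?_
  obtain ⟨t, ht⟩ := hA.elim_finite_subcover U hU (hAB.trans hBU)
  refine ⟨t, fun b hb => ?_⟩
  obtain ⟨a, ha, hab⟩ := hBA hb
  exact hab _ (isOpen_biUnion fun i _ => hU i) (ht ha)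

theorem subset_specUpSet (A : Set X) : A ⊆ specUpSet A :=
  fun a ha => ⟨a, ha, fun _ _ h => h⟩

theorem isCompact_specUpSet {A : Set X} (hA : IsCompact A) : IsCompact (specUpSet A) :=
  isCompact_of_subset_specUpSet hA (subset_specUpSet A) subset_rfl

theorem isOpen_setOf_subset {ς : Y → SmythP X} (hς : Continuous ς) {U : Set X} (hU : IsOpen U) :
    IsOpen {y | (ς y).1 ⊆ U} :=
  IsOpen.preimage hς (isOpen_generateFrom_of_mem ⟨U, hU, rfl⟩)

theorem exists_specLE {r : X → Y} {ς : Y → SmythP X}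
    (h : ∀ y, specUpSet (r '' (ς y).1) = specUp y) (y : Y) : ∃ x ∈ (ς y).1, specLE (r x) y := by
  have : y ∈ specUpSet (r '' (ς y).1) := by
    rw [h]
    exact fun _ _ hy => hy
  obtain ⟨_, ⟨x, hx, rfl⟩, hxy⟩ := this
  exact ⟨x, hx, hxy⟩

/-- Inverse image under `r` is a section of `U ↦ {y | ς y ⊆ U}`. -/
theorem subset_preimage_iff {r : X → Y} {ς : Y → SmythP X}
    (h : ∀ y, specUpSet (r '' (ς y).1) = specUp y) {V : Set Y} (hV : IsOpen V) (y : Y) :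
    (ς y).1 ⊆ r ⁻¹' V ↔ y ∈ V := by
  constructor
  · intro hy
    obtain ⟨x, hx, hxy⟩ := exists_specLE h y
    exact hxy V hV (hy hx)
  · intro hy x hx
    have : r x ∈ specUp y := h y ▸ subset_specUpSet _ (mem_image_of_mem r hx)
    exact this V hV hy

/-- The multiplication of the Smyth powerspace monad, restricted to the image of `ς`: a compact
union of the compact sets `ς y` is compact. -/
theorem isCompact_biUnion_smyth {ς : Y → SmythP X} (hς : Continuous ς) {Q : Set Y}
    (hQ : IsCompact Q) : IsCompact (⋃ y ∈ Q, (ς y).1) := by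
  refine isCompact_of_finite_subcover fun {ι} U hU hcov => ?_
  have hdir : Directed (· ⊆ ·) fun t : Finset ι => {y | (ς y).1 ⊆ ⋃ i ∈ t, U i} :=
    Monotone.directed_le fun s t hst y (hy : (ς y).1 ⊆ _) =>
      hy.trans (biUnion_subset_biUnion_left hst)
  obtain ⟨t, ht⟩ := hQ.elim_directed_cover _
    (fun t => isOpen_setOf_subset hς (isOpen_biUnion fun i _ => hU i))
    (fun y hy => by
      obtain ⟨t, ht⟩ := (ς y).2.2.1.elim_finite_subcover U hU
        ((subset_biUnion_of_mem (u := fun y => (ς y).1) hy).trans hcov)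
      exact mem_iUnion.2 ⟨t, ht⟩) hdir
  exact ⟨t, iUnion₂_subset fun y hy => ht hy⟩

theorem isSaturatedSet_biUnion_smyth (ς : Y → SmythP X) (Q : Set Y) :
    IsSaturatedSet (⋃ y ∈ Q, (ς y).1) := by
  intro x hx x' hxx'
  obtain ⟨y, hy, hxy⟩ := mem_iUnion₂.1 hx
  exact mem_iUnion₂.2 ⟨y, hy, (ς y).2.2.2 x hxy x' hxx'⟩

theorem quasiRetract_compactSpace [CompactSpace X] {r : X → Y} (hr : Continuous r)
    {ς : Y → SmythP X} (h : ∀ y, specUpSet (r '' (ς y).1) = specUp y) : CompactSpace Y := by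
  refine ⟨isCompact_of_subset_specUpSet (isCompact_univ.image hr) (subset_univ _) fun y _ => ?_⟩
  obtain ⟨x, -, hxy⟩ := exists_specLE h y
  exact ⟨r x, mem_image_of_mem r (mem_univ x), hxy⟩

theorem quasiRetract_locallyCompactSpace [LocallyCompactSpace X] {r : X → Y} (hr : Continuous r)
    {ς : Y → SmythP X} (hς : Continuous ς) (h : ∀ y, specUpSet (r '' (ς y).1) = specUp y) :
    LocallyCompactSpace Y := by
  refine ⟨fun y N hN => ?_⟩
  obtain ⟨V, hVN, hV, hyV⟩ := mem_nhds_iff.1 hN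
  obtain ⟨L, hL, hyL, hLV⟩ := exists_compact_between (ς y).2.2.1 (hV.preimage hr)
    ((subset_preimage_iff h hV y).2 hyV)
  refine ⟨specUpSet (r '' L), mem_nhds_iff.2 ⟨{z | (ς z).1 ⊆ interior L}, fun z hz => ?_,
    isOpen_setOf_subset hς isOpen_interior, hyL⟩, ?_, isCompact_specUpSet (hL.image hr)⟩
  · obtain ⟨x, hx, hxz⟩ := exists_specLE h z
    exact ⟨r x, mem_image_of_mem r (interior_subset (hz hx)), hxz⟩
  · rintro z ⟨_, ⟨x, hx, rfl⟩, hxz⟩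
    exact hVN (hxz V hV (hLV hx))

theorem quasiRetract_quasiSober [QuasiSober X] {r : X → Y} (hr : Continuous r)
    {ς : Y → SmythP X} (hς : Continuous ς) (h : ∀ y, specUpSet (r '' (ς y).1) = specUp y) :
    QuasiSober Y := by
  refine ⟨fun {C} hC hCc => ?_⟩
  let S : Set (Set X) := {W | IsOpen W ∧ ∀ y ∈ C, ¬ (ς y).1 ⊆ W}
  have h₀ : r ⁻¹' Cᶜ ∈ S := ⟨hCc.isOpen_compl.preimage hr, fun y hy hsub =>
    (subset_preimage_iff h hCc.isOpen_compl y).1 hsub hy⟩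
  have hchain : ∀ c ⊆ S, IsChain (· ⊆ ·) c → c.Nonempty → ∃ ub ∈ S, ∀ s ∈ c, s ⊆ ub := by
    intro c hcS hc hne
    refine ⟨⋃₀ c, ⟨isOpen_sUnion fun s hs => (hcS hs).1, fun y hy hsub => ?_⟩,
      fun s hs => subset_sUnion_of_mem hs⟩
    have : Nonempty c := hne.to_subtype
    obtain ⟨⟨s, hs⟩, hys⟩ := (ς y).2.2.1.elim_directed_cover (fun s : c => s.1)
      (fun s => (hcS s.2).1) (by rwa [← sUnion_eq_iUnion]) hc.directedOn.directed_val
    exact (hcS hs).2 y hy hys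
  obtain ⟨M, hM₀, hM⟩ := zorn_subset_nonempty S hchain _ h₀
  -- By maximality, an open set meeting `Mᶜ` enlarges `M` to a member of the filter.
  have hmax : ∀ U, IsOpen U → (Mᶜ ∩ U).Nonempty → ∃ y ∈ C, (ς y).1 ⊆ M ∪ U := by
    rintro U hU ⟨x, hxM, hxU⟩
    by_contra! hcon
    exact hxM (hM.2 (y := M ∪ U) ⟨hM.1.1.union hU, hcon⟩ subset_union_left (Or.inr hxU))
  have hirr : IsIrreducible Mᶜ := by
    constructor
    · obtain ⟨y, hy⟩ := hC.1
      obtain ⟨x, -, hx⟩ := not_subset.1 (hM.1.2 y hy)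
      exact ⟨x, hx⟩
    · intro U V hU hV hMU hMV
      obtain ⟨y₁, hy₁, hU'⟩ := hmax U hU hMU
      obtain ⟨y₂, hy₂, hV'⟩ := hmax V hV hMV
      obtain ⟨y, hy, hyU, hyV⟩ := hC.2 _ _ (isOpen_setOf_subset hς (hM.1.1.union hU))
        (isOpen_setOf_subset hς (hM.1.1.union hV)) ⟨y₁, hy₁, hU'⟩ ⟨y₂, hy₂, hV'⟩
      obtain ⟨x, hx, hxM⟩ := not_subset.1 (hM.1.2 y hy)
      exact ⟨x, hxM, (hyU hx).resolve_left hxM, (hyV hx).resolve_left hxM⟩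
  obtain ⟨x, hx⟩ := QuasiSober.sober hirr hM.1.1.isClosed_compl
  have hxC : r x ∈ C := by
    by_contra hcon
    exact hx.mem (hM₀ hcon)
  refine ⟨r x, subset_antisymm (closure_minimal (singleton_subset_iff.2 hxC) hCc) fun y hy => ?_⟩
  rw [mem_closure_iff]
  intro V hV hyV
  obtain ⟨z, hz, hzM⟩ := not_subset.1 (hM.1.2 y hy)
  have hzV : z ∈ r ⁻¹' V := (subset_preimage_iff h hV y).2 hyV hz
  exact ⟨r x, (hx.mem_open_set_iff (hV.preimage hr)).2 ⟨z, hzM, hzV⟩, rfl⟩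

theorem quasiRetract_isCoherent (hX : IsCoherent X) {r : X → Y} (hr : Continuous r)
    {ς : Y → SmythP X} (hς : Continuous ς) (h : ∀ y, specUpSet (r '' (ς y).1) = specUp y) :
    IsCoherent Y := by
  intro Q₁ Q₂ hQ₁ hs₁ hQ₂ hs₂
  have hK := hX _ _ (isCompact_biUnion_smyth hς hQ₁) (isSaturatedSet_biUnion_smyth ς Q₁)
    (isCompact_biUnion_smyth hς hQ₂) (isSaturatedSet_biUnion_smyth ς Q₂)
  have key : ∀ Q : Set Y, IsSaturatedSet Q → ∀ x ∈ ⋃ y ∈ Q, (ς y).1, r x ∈ Q := by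
    intro Q hQ x hx
    obtain ⟨y, hy, hxy⟩ := mem_iUnion₂.1 hx
    have : r x ∈ specUp y := h y ▸ subset_specUpSet _ (mem_image_of_mem r hxy)
    exact hQ y hy _ this
  refine isCompact_of_subset_specUpSet (hK.image hr) ?_ ?_
  · rintro _ ⟨x, ⟨hx₁, hx₂⟩, rfl⟩
    exact ⟨key Q₁ hs₁ x hx₁, key Q₂ hs₂ x hx₂⟩
  · rintro y ⟨hy₁, hy₂⟩
    obtain ⟨x, hx, hxy⟩ := exists_specLE h y
    exact ⟨r x, mem_image_of_mem r ⟨mem_biUnion hy₁ hx, mem_biUnion hy₂ hx⟩, hxy⟩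

end QuasiRetract

/-- Every T0 quasi-retract of a stably compact space is stably compact. -/
theorem quasiRetract_stablyCompact {X : Type u} {Y : Type v}
    [TopologicalSpace X] [TopologicalSpace Y]
    (hX : IsStablyCompact X) (hY : T0Space Y)
    (r : X → Y) (hr : IsQuasiRetraction r) :
    IsStablyCompact Y := by
  obtain ⟨_, _, _, _, hcoh⟩ := hX
  obtain ⟨hrc, ς, hς, h⟩ := hr
  exact ⟨hY, quasiRetract_compactSpace hrc h, quasiRetract_locallyCompactSpace hrc hς h,
    quasiRetract_quasiSober hrc hς h, quasiRetract_isCoherent hcoh hrc hς h⟩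
end

section
/- Let X be a topological space and Y a T0 topological space. For a map r : X → Y the following are equivalent: (1) r is a quasi-retraction with a matching quasi-section ς : Y → S_V(X) such that additionally x ∈ ς(r(x)) for every x ∈ X; (2) r is proper and surjective. Moreover, the quasi-section ς in (1) is unique and given by ς(y) = r⁻¹(↑y). -/
/-!
The heart of the matter is that a quasi-section `ς` with `x ∈ ς (r x)` must be
`y ↦ r⁻¹(↑y)` (`quasiSection_eq_preimage`), because continuous maps into the Smyth
powerspace are antitone for inclusion (`smythP_antitone_of_continuous`). For this
particular `ς`, continuity says exactly that `{y | r⁻¹(↑y) ⊆ Fᶜ}` is open for every closed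
`F`, and this set is the complement of `↓r(F)` (`compl_specDownSet_image`). The
compactness of `r⁻¹(↑y)` is what makes `ς y` a point of the Smyth powerspace, and
surjectivity of `r` corresponds to `↑r(ς y)` reaching down to `y`: the T0 axiom turns
`y ≤ r a ≤ y` into `r a = y`.
-/

open Set TopologicalSpace

universe u v

theorem isOpen_smythP_box {X : Type u} [TopologicalSpace X] {U : Set X} (hU : IsOpen U) :
    IsOpen {Q : SmythP X | Q.1 ⊆ U} :=
  GenerateOpen.basic _ ⟨U, hU, rfl⟩

/-- The sets `ς y` shrink as `y` grows in the specialization order: a continuous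
map is monotone for specialization, and the specialization order of the upper Vietoris
topology is reverse inclusion, since a point `z` outside a saturated `Q` gives the open
neighbourhood `◻(closure {z})ᶜ` of `Q`. -/
theorem smythP_antitone_of_continuous {X : Type u} {Y : Type v}
    [TopologicalSpace X] [TopologicalSpace Y] {ς : Y → SmythP X} (hς : Continuous ς)
    {y y' : Y} (h : specLE y y') : (ς y').1 ⊆ (ς y).1 := by
  intro z hz
  by_contra hzy
  have ho : IsOpen (ς ⁻¹' {Q : SmythP X | Q.1 ⊆ (closure {z})ᶜ}) :=
    (isOpen_smythP_box isClosed_closure.isOpen_compl).preimage hς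
  have hy : y ∈ ς ⁻¹' {Q : SmythP X | Q.1 ⊆ (closure {z})ᶜ} := by
    intro q hq hqz
    refine hzy ((ς y).2.2.2 q hq z fun U hU hqU => ?_)
    obtain ⟨w, hwU, rfl⟩ := mem_closure_iff.mp hqz U hU hqU
    exact hwU
  exact h _ ho hy hz (subset_closure rfl)

/-- The inclusion `⊆` is the quasi-section identity; `⊇` is monotonicity of `ς` applied to
`y ≤ r x`, together with `x ∈ ς (r x)`. -/
theorem quasiSection_eq_preimage {X : Type u} {Y : Type v}
    [TopologicalSpace X] [TopologicalSpace Y] {r : X → Y} {ς : Y → SmythP X}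
    (hς : Continuous ς) (hsec : ∀ y : Y, specUpSet (r '' (ς y).1) = specUp y)
    (hmem : ∀ x : X, x ∈ (ς (r x)).1) (y : Y) : (ς y).1 = r ⁻¹' specUp y := by
  ext x
  constructor
  · intro hx
    have : r x ∈ specUpSet (r '' (ς y).1) := ⟨r x, ⟨x, hx, rfl⟩, fun _ _ h => h⟩
    rwa [hsec] at this
  · exact fun hx => smythP_antitone_of_continuous hς hx (hmem x)

/-- The link between closedness of `↓r(F)` and the upper Vietoris topology: the complement
of `↓r(F)` is the inverse image of `◻Fᶜ` under `y ↦ r⁻¹(↑y)`. -/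
theorem compl_specDownSet_image {X : Type u} {Y : Type v} [TopologicalSpace Y]
    (r : X → Y) (F : Set X) :
    (specDownSet (r '' F))ᶜ = {y | r ⁻¹' specUp y ⊆ Fᶜ} := by
  ext y
  constructor
  · exact fun hy x hx hxF => hy ⟨r x, ⟨x, hxF, rfl⟩, hx⟩
  · rintro hy ⟨_, ⟨x, hxF, rfl⟩, hx⟩
    exact hy hx hxF

/-- For `r : X → Y` with `Y` T0: `r` is a quasi-retraction with a quasi-section `ς`
satisfying `x ∈ ς (r x)` for all `x`, iff `r` is proper and surjective.  Moreover,
such a quasi-section is unique, given by `ς y = r⁻¹ (↑y)`. -/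
theorem quasiProjection_iff_proper_surjective {X : Type u} {Y : Type v}
    [TopologicalSpace X] [TopologicalSpace Y] [T0Space Y] (r : X → Y) :
    ((Continuous r ∧ ∃ ς : Y → SmythP X, Continuous ς ∧
        (∀ y : Y, specUpSet (r '' (ς y).1) = specUp y) ∧ ∀ x : X, x ∈ (ς (r x)).1) ↔
      (PaperProper r ∧ Function.Surjective r)) ∧
    ∀ ς : Y → SmythP X, Continuous ς →
      (∀ y : Y, specUpSet (r '' (ς y).1) = specUp y) → (∀ x : X, x ∈ (ς (r x)).1) →
      ∀ y : Y, (ς y).1 = r ⁻¹' specUp y := by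
  refine ⟨⟨?_, ?_⟩, fun ς hς hsec hmem => quasiSection_eq_preimage hς hsec hmem⟩
  · rintro ⟨hr, ς, hς, hsec, hmem⟩
    have heq := quasiSection_eq_preimage hς hsec hmem
    refine ⟨⟨hr, fun F hF => ?_, fun y => heq y ▸ (ς y).2.2.1⟩, fun y => ?_⟩
    · rw [← isOpen_compl_iff, compl_specDownSet_image]
      simp only [← heq]
      exact (isOpen_smythP_box hF.isOpen_compl).preimage hς
    · have hy : y ∈ specUpSet (r '' (ς y).1) := by
        rw [hsec]
        exact fun _ _ h => h
      obtain ⟨_, ⟨a, ha, rfl⟩, hle⟩ := hy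
      rw [heq] at ha
      exact ⟨a, (inseparable_iff_forall_isOpen.mpr fun U hU => ⟨hle U hU, ha U hU⟩).eq⟩
  · rintro ⟨⟨hr, hclosed, hcompact⟩, hsurj⟩
    refine ⟨hr, fun y => ⟨r ⁻¹' specUp y, ?_, hcompact y, ?_⟩, ?_, fun y => ?_,
      fun x _ _ h => h⟩
    · obtain ⟨x, rfl⟩ := hsurj y
      exact ⟨x, fun _ _ h => h⟩
    · exact fun x hx x' hxx' U hU hyU => hxx' _ (hU.preimage hr) (hx U hU hyU)
    · refine continuous_generateFrom_iff.mpr ?_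
      rintro _ ⟨U, hU, rfl⟩
      have ho := (hclosed Uᶜ hU.isClosed_compl).isOpen_compl
      rwa [compl_specDownSet_image, compl_compl] at ho
    · ext z
      constructor
      · rintro ⟨_, ⟨x, hx, rfl⟩, hz⟩ U hU hyU
        exact hz U hU (hx U hU hyU)
      · intro hz
        obtain ⟨x, rfl⟩ := hsurj y
        exact ⟨r x, ⟨x, fun _ _ h => h, rfl⟩, hz⟩
end

section
/- Let Y be a dcpo, y ∈ Y, and (↑E_i)_{i∈ℕ} a sequence of nonempty finitary compacts of Y that is non-decreasing with respect to reverse inclusion (↑E_i ⊇ ↑E_{i+1} for all i) and satisfies ↑y = ⋂_{i∈ℕ} ↑E_i. Then there is a non-decreasing sequence (y_i)_{i∈ℕ} in Y with y_i ∈ E_i for every i and sup_{i∈ℕ} y_i = y. -/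
/-!
The elements of `E i` below `y` form a finite set, nonempty because `y ∈ ↑(E i)`. As
`↑(E (i + 1)) ⊆ ↑(E i)`, every such element at level `i + 1` dominates one at level `i`, so a
choice of dominated elements turns these sets into an inverse sequence of nonempty finite sets.
By König's lemma (`nonempty_sections_of_finite_cofiltered_system`) it has a section, which is a
non-decreasing sequence `c` bounded by `y`. Its supremum is below `y`, and it belongs to every
`↑(E i)`, hence to `↑y`.
-/

open Set TopologicalSpace

universe u v

/-- König's lemma for a sequence of nonempty finite sets in a preorder, each of which refines the
preceding one from above. -/
theorem exists_monotone_of_finite_refining {Y : Type u} [Preorder Y] (F : ℕ → Set Y)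
    (hfin : ∀ i, (F i).Finite) (hne : ∀ i, (F i).Nonempty)
    (hdown : ∀ i, ∀ b ∈ F (i + 1), ∃ a ∈ F i, a ≤ b) :
    ∃ c : ℕ → Y, Monotone c ∧ ∀ i, c i ∈ F i := by
  choose g hgmem hgle using hdown
  let G := CategoryTheory.Functor.ofOpSequence (C := Type u) (X := fun i => ↥(F i))
    fun i => TypeCat.ofHom fun b => (⟨g i b.1 b.2, hgmem i b.1 b.2⟩ : ↥(F i))
  have hfin' : ∀ j, Finite (G.obj j) := fun j => (hfin j.unop).to_subtype
  have hne' : ∀ j, Nonempty (G.obj j) := fun j => (hne j.unop).to_subtype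
  obtain ⟨s, hs⟩ := nonempty_sections_of_finite_cofiltered_system G
  refine ⟨fun i => (s (Opposite.op i)).1, monotone_nat_of_le_succ fun i => ?_,
    fun i => (s (Opposite.op i)).2⟩
  have h := hs (CategoryTheory.homOfLE (Nat.le_add_right i 1)).op
  rw [CategoryTheory.Functor.ofOpSequence_map_homOfLE_succ] at h
  rw [← h]
  exact hgle i _ _

/-- If `(↑E i)` is a non-decreasing (w.r.t. reverse inclusion) sequence of nonempty
finitary compacts of a dcpo `Y` with `⋂ i, ↑(E i) = ↑y`, then one can pick a
non-decreasing sequence `c i ∈ E i` with `sup_i (c i) = y`. -/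
theorem exists_monotone_selection {Y : Type u} [PartialOrder Y] (hY : IsDcpo Y)
    (y : Y) (E : ℕ → Set Y) (hfin : ∀ i, (E i).Finite) (hne : ∀ i, (E i).Nonempty)
    (hmono : ∀ i : ℕ, upClos (E (i + 1)) ⊆ upClos (E i))
    (hinter : (⋂ i, upClos (E i)) = Set.Ici y) :
    ∃ c : ℕ → Y, Monotone c ∧ (∀ i, c i ∈ E i) ∧ IsLUB (Set.range c) y := by
  have hy : ∀ i, y ∈ upClos (E i) := by
    rw [← Set.mem_iInter, hinter]
    exact Set.self_mem_Ici
  obtain ⟨c, hc, hcF⟩ := exists_monotone_of_finite_refining (fun i => E i ∩ Set.Iic y)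
    (fun i => (hfin i).inter_of_left _) (fun i => hy i) fun i b hb => by
      obtain ⟨a, ha, hab⟩ := hmono i ⟨b, hb.1, le_rfl⟩
      exact ⟨a, ⟨ha, hab.trans hb.2⟩, hab⟩
  refine ⟨c, hc, fun i => (hcF i).1, ?_⟩
  obtain ⟨a, ha⟩ := hY (Set.range c) (Set.range_nonempty c) hc.directed_le.directedOn_range
  have hay : a ≤ y := ha.2 (by rintro _ ⟨i, rfl⟩; exact (hcF i).2)
  have hya : a ∈ Set.Ici y := by
    rw [← hinter, Set.mem_iInter]
    exact fun i => ⟨c i, (hcF i).1, ha.1 ⟨i, rfl⟩⟩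
  exact le_antisymm hay hya ▸ ha
end
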